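/- arXiv:2110.15908 — 4 statements merged into one kernel-verified Lean document; each statement's English description precedes it below -/
import Mathlib

section
/- Let X be a smooth extremal surface of degree q+1 in ℙ³(k). Then Aut(X) acts transitively on the set of star points of X: for any two star points p and p' of X there exists g ∈ Aut(X) with g(p) = p'. Equivalently, Aut(X) acts transitively on the set of stars of X. -/
open Module

/-! Basic setup: `k` is an algebraically closed field of characteristic `p > 0`,
`q = p^e`.  We model ℙ³(k) via linear subspaces of `k⁴ = Fin 4 → k`:
points, lines and planes of ℙ³(k) are subspaces of dimension 1, 2 and 3
respectively.  A hypersurface cut out by a homogeneous form is recorded by its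
affine cone in `k⁴`. -/

/-- The Frobenius form in 4 variables determined by a 4×4 matrix `A`:
`∑ i j, A i j * x i ^ q * x j`, a homogeneous form of degree `q+1`. -/
def frobForm {k : Type*} [Field k] (q : ℕ) (A : Matrix (Fin 4) (Fin 4) k)
    (x : Fin 4 → k) : k :=
  ∑ i, ∑ j, A i j * x i ^ q * x j

/-- The affine cone in `k⁴` of the extremal surface in ℙ³(k) cut out by the
Frobenius form with matrix `A`; a point of ℙ³(k) lies on the surface iff its
homogeneous coordinate representatives lie in this set. -/
def extremalCone (k : Type*) [Field k] (q : ℕ) (A : Matrix (Fin 4) (Fin 4) k) :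
    Set (Fin 4 → k) :=
  {x | frobForm q A x = 0}

/-- A point of ℙ³(k): a 1-dimensional subspace of `k⁴`. -/
def IsPoint {k : Type*} [Field k] (c : Submodule k (Fin 4 → k)) : Prop :=
  finrank k c = 1

/-- A line of ℙ³(k): a 2-dimensional subspace of `k⁴`. -/
def IsLine {k : Type*} [Field k] (L : Submodule k (Fin 4 → k)) : Prop :=
  finrank k L = 2

/-- A plane of ℙ³(k): a 3-dimensional subspace of `k⁴`. -/
def IsPlane {k : Type*} [Field k] (H : Submodule k (Fin 4 → k)) : Prop :=
  finrank k H = 3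

/-- `L` is a line lying on the surface with affine cone `X`. -/
def IsLineOn {k : Type*} [Field k] (X : Set (Fin 4 → k))
    (L : Submodule k (Fin 4 → k)) : Prop :=
  IsLine L ∧ (L : Set (Fin 4 → k)) ⊆ X

/-- Two lines of ℙ³(k) meet iff the corresponding subspaces of `k⁴` intersect
nontrivially. -/
def MeetsLine {k : Type*} [Field k] (L M : Submodule k (Fin 4 → k)) : Prop :=
  L ⊓ M ≠ ⊥

/-- Two lines of ℙ³(k) are skew iff the corresponding subspaces of `k⁴`
intersect trivially. -/
def SkewLine {k : Type*} [Field k] (L M : Submodule k (Fin 4 → k)) : Prop :=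
  L ⊓ M = ⊥

/-- `IsStarAt q X S c`: `S` is a star on the surface with affine cone `X`,
centered at the point `c`, i.e. a set of `q+1` distinct lines on the surface
all passing through `c`. -/
def IsStarAt {k : Type*} [Field k] (q : ℕ) (X : Set (Fin 4 → k))
    (S : Set (Submodule k (Fin 4 → k))) (c : Submodule k (Fin 4 → k)) : Prop :=
  IsPoint c ∧ S.ncard = q + 1 ∧ ∀ L ∈ S, IsLineOn X L ∧ c ≤ L

/-- `S` is a star on the surface with affine cone `X`. -/
def IsStar {k : Type*} [Field k] (q : ℕ) (X : Set (Fin 4 → k))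
    (S : Set (Submodule k (Fin 4 → k))) : Prop :=
  ∃ c, IsStarAt q X S c

/-- `c` is a star point of the surface with affine cone `X`. -/
def IsStarPoint {k : Type*} [Field k] (q : ℕ) (X : Set (Fin 4 → k))
    (c : Submodule k (Fin 4 → k)) : Prop :=
  ∃ S, IsStarAt q X S c

/-- `H` is a star plane of the surface with affine cone `X`, centered at `c`:
the plane section `X ∩ H` is the union of a star centered at `c`. -/
def IsStarPlaneAt {k : Type*} [Field k] (q : ℕ) (X : Set (Fin 4 → k))
    (H c : Submodule k (Fin 4 → k)) : Prop :=
  IsPlane H ∧ ∃ S, IsStarAt q X S c ∧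
    X ∩ (H : Set (Fin 4 → k)) = ⋃ L ∈ S, (L : Set (Fin 4 → k))

/-- An element of `Aut(X)`: since every projective linear automorphism of
ℙ³(k) is represented by an invertible linear map of `k⁴` (uniquely up to
scalars, which act trivially on subspaces and preserve every cone), `g ∈
PGL(4,k)` with `g(X) = X` corresponds to a linear automorphism of `k⁴`
mapping the affine cone `X` onto itself. -/
def PreservesCone {k : Type*} [Field k] (X : Set (Fin 4 → k))
    (g : (Fin 4 → k) ≃ₗ[k] (Fin 4 → k)) : Prop :=
  (⇑g) '' X = X

section Helpers
variable {k : Type*} [Field k]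

/-- The sesquilinear form attached to `A`. -/
def fB (q : ℕ) (A : Matrix (Fin 4) (Fin 4) k) (x y : Fin 4 → k) : k :=
  ∑ i, ∑ j, A i j * x i ^ q * y j

theorem fB_add_right (q : ℕ) (A : Matrix (Fin 4) (Fin 4) k) (x y z : Fin 4 → k) :
    fB q A x (y + z) = fB q A x y + fB q A x z := by
  simp only [fB, Pi.add_apply, mul_add, Finset.sum_add_distrib]

theorem fB_smul_right (q : ℕ) (A : Matrix (Fin 4) (Fin 4) k) (t : k) (x y : Fin 4 → k) :
    fB q A x (t • y) = t * fB q A x y := by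
  simp only [fB, Pi.smul_apply, smul_eq_mul, Finset.mul_sum]
  refine Finset.sum_congr rfl fun i _ => Finset.sum_congr rfl fun j _ => by ring

theorem fB_smul_left (q : ℕ) (A : Matrix (Fin 4) (Fin 4) k) (t : k) (x y : Fin 4 → k) :
    fB q A (t • x) y = t ^ q * fB q A x y := by
  simp only [fB, Pi.smul_apply, smul_eq_mul, Finset.mul_sum, mul_pow]
  refine Finset.sum_congr rfl fun i _ => Finset.sum_congr rfl fun j _ => by ring

/-- The exponent `q` is additive on `k`, and is at least two. -/
def GoodExp (k : Type*) [Field k] (q : ℕ) : Prop :=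
  2 ≤ q ∧ ∀ x y : k, (x + y) ^ q = x ^ q + y ^ q

theorem fB_add_left {q : ℕ} (hg : GoodExp k q) (A : Matrix (Fin 4) (Fin 4) k)
    (x y z : Fin 4 → k) :
    fB q A (x + y) z = fB q A x z + fB q A y z := by
  simp only [fB, Pi.add_apply, hg.2, mul_add, add_mul, Finset.sum_add_distrib]

theorem GoodExp.neg {q : ℕ} (hg : GoodExp k q) (x : k) : (-x) ^ q = - x ^ q := by
  have h := hg.2 x (-x)
  rw [add_neg_cancel, zero_pow (by have := hg.1; omega)] at h
  linear_combination -h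

theorem fB_eq (q : ℕ) (A : Matrix (Fin 4) (Fin 4) k) (x y : Fin 4 → k) :
    fB q A x y = (fun i => x i ^ q) ⬝ᵥ (A.mulVec y) := by
  simp only [fB, dotProduct, Matrix.mulVec, Finset.mul_sum]
  refine Finset.sum_congr rfl fun i _ => Finset.sum_congr rfl fun j _ => by ring

theorem fB_nondeg_left {q : ℕ} (hg : GoodExp k q) {A : Matrix (Fin 4) (Fin 4) k}
    (hA : IsUnit A) {x : Fin 4 → k} (h : ∀ y, fB q A x y = 0) : x = 0 := by
  have h1 : (fun i => x i ^ q) = 0 := by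
    apply Matrix.vecMul_injective_of_isUnit hA
    show Matrix.vecMul _ A = Matrix.vecMul 0 A
    rw [Matrix.zero_vecMul]
    apply dotProduct_eq
    intro y
    rw [← Matrix.dotProduct_mulVec, ← fB_eq, h, zero_dotProduct]
  funext i
  exact eq_zero_of_pow_eq_zero (congrFun h1 i)

theorem fB_nondeg_right [IsAlgClosed k] {q : ℕ} (hg : GoodExp k q)
    {A : Matrix (Fin 4) (Fin 4) k}
    (hA : IsUnit A) {y : Fin 4 → k} (h : ∀ x, fB q A x y = 0) : y = 0 := by
  apply Matrix.mulVec_injective_of_isUnit hA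
  show A.mulVec y = A.mulVec 0
  rw [Matrix.mulVec_zero]
  have hq : 0 < q := by have := hg.1; omega
  apply dotProduct_eq
  intro u
  choose x hx using fun i => IsAlgClosed.exists_pow_nat_eq (u i) hq
  have := h x
  rw [fB_eq] at this
  rw [zero_dotProduct, dotProduct_comm, ← this]
  congr 1
  funext i
  exact (hx i).symm

theorem exists_AS [IsAlgClosed k] {n : ℕ} (hn : 2 ≤ n) (c d : k) :
    ∃ t : k, t ^ n + c * t = d := by
  have hdeg : (Polynomial.X ^ n + (Polynomial.C c * Polynomial.X + Polynomial.C (-d)) :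
      Polynomial k).degree = n := by
    rw [Polynomial.degree_add_eq_left_of_degree_lt, Polynomial.degree_X_pow]
    rw [Polynomial.degree_X_pow]
    refine lt_of_le_of_lt Polynomial.degree_linear_le ?_
    exact_mod_cast hn
  obtain ⟨t, ht⟩ := IsAlgClosed.exists_root ((Polynomial.X ^ n +
    (Polynomial.C c * Polynomial.X + Polynomial.C (-d)) : Polynomial k)) (by
      rw [hdeg]; norm_cast; omega)
  refine ⟨t, ?_⟩
  simp [Polynomial.IsRoot] at ht
  linear_combination ht

theorem exists_scale [IsAlgClosed k] {q : ℕ} (hg : GoodExp k q) {a b : k} (ha : a ≠ 0)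
    (hb : b ≠ 0) : ∃ α β : k, α ≠ 0 ∧ β ≠ 0 ∧ α ^ q * (β * a) = 1 ∧ β ^ q * (α * b) = 1 := by
  have hq := hg.1
  have hq2 : 0 < q ^ 2 - 1 := by
    have : 2 ^ 2 ≤ q ^ 2 := Nat.pow_le_pow_left hq 2
    omega
  obtain ⟨α, hα⟩ := IsAlgClosed.exists_pow_nat_eq (b / a ^ q) hq2
  have hα0 : α ≠ 0 := by
    rintro rfl
    rw [zero_pow hq2.ne'] at hα
    exact div_ne_zero hb (pow_ne_zero _ ha) hα.symm
  have h2 : α ^ (q * q) = α * (b / a ^ q) := by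
    rw [← hα, ← pow_succ']
    congr 1
    rw [← sq]
    omega
  refine ⟨α, (α ^ q * a)⁻¹, hα0, by positivity, ?_, ?_⟩
  · field_simp
  · rw [inv_pow, mul_pow, ← pow_mul, h2]
    field_simp

/-- On a line contained in the surface the sesquilinear form vanishes. -/
theorem fB_line [IsAlgClosed k] {q : ℕ} (hg : GoodExp k q) {A : Matrix (Fin 4) (Fin 4) k}
    {L : Submodule k (Fin 4 → k)} (hL : (L : Set (Fin 4 → k)) ⊆ extremalCone k q A)
    {x y : Fin 4 → k} (hx : x ∈ L) (hy : y ∈ L) : fB q A x y = 0 := by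
  have h0 : ∀ z ∈ L, fB q A z z = 0 := fun z hz => hL hz
  have h1 : ∀ t : k, t * fB q A x y + t ^ q * fB q A y x = 0 := by
    intro t
    have := h0 (x + t • y) (L.add_mem hx (L.smul_mem t hy))
    simp only [fB_add_left hg, fB_add_right, fB_smul_left, fB_smul_right, h0 x hx, h0 y hy] at this
    linear_combination this
  obtain ⟨t, ht⟩ := exists_AS hg.1 (-1 : k) 1
  have h2 := h1 1
  have h3 := h1 t
  rw [one_pow] at h2
  linear_combination (1 + t) * h2 - h3 + (fB q A y x) * ht

/-- Normalised frame with a hyperbolic Gram matrix. -/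
structure Frame (q : ℕ) (A : Matrix (Fin 4) (Fin 4) k) (v a b w : Fin 4 → k) : Prop where
  vv : fB q A v v = 0
  va : fB q A v a = 0
  vb : fB q A v b = 0
  vw : fB q A v w = 1
  av : fB q A a v = 0
  aa : fB q A a a = 0
  ab : fB q A a b = 1
  aw : fB q A a w = 0
  bv : fB q A b v = 0
  ba : fB q A b a = 1
  bb : fB q A b b = 0
  bw : fB q A b w = 0
  wv : fB q A w v = 1
  wa : fB q A w a = 0
  wb : fB q A w b = 0
  ww : fB q A w w = 0

theorem frame_step [IsAlgClosed k] {q : ℕ} (hg : GoodExp k q) {A : Matrix (Fin 4) (Fin 4) k}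
    {v a b w : Fin 4 → k} (vv : fB q A v v = 0) (va : fB q A v a = 0) (vb : fB q A v b = 0)
    (vw : fB q A v w = 1) (av : fB q A a v = 0) (aa : fB q A a a = 0) (ab : fB q A a b = 1)
    (bv : fB q A b v = 0) (ba : fB q A b a = 1) (bb : fB q A b b = 0) (wv : fB q A w v = 1) :
    ∃ a' b' w', Frame q A v a' b' w' := by
  have hq := hg.1
  have hqq : 2 ≤ q * q := by nlinarith
  obtain ⟨t2, ht2⟩ := exists_AS hqq (-1) (fB q A a w - fB q A w a ^ q)
  obtain ⟨t1, ht1⟩ := exists_AS hqq (-1) (fB q A b w - fB q A w b ^ q)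
  rw [pow_mul] at ht1 ht2
  obtain ⟨r, hr⟩ := exists_AS hq 1 (- fB q A (w + t1 • a + t2 • b) (w + t1 • a + t2 • b))
  have hs1 : (-(fB q A w a) - t2 ^ q) ^ q = - fB q A w a ^ q - (t2 ^ q) ^ q := by
    rw [sub_eq_add_neg, hg.2, hg.neg, hg.neg]; ring
  have hs2 : (-(fB q A w b) - t1 ^ q) ^ q = - fB q A w b ^ q - (t1 ^ q) ^ q := by
    rw [sub_eq_add_neg, hg.2, hg.neg, hg.neg]; ring
  simp only [fB_add_left hg, fB_add_right, fB_smul_left, fB_smul_right, vv, va, vb, vw, av, aa,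
    ab, bv, ba, bb, wv] at hr
  refine ⟨a + (-(fB q A w a) - t2 ^ q) • v, b + (-(fB q A w b) - t1 ^ q) • v,
    w + t1 • a + t2 • b + r • v, ?_⟩
  constructor <;>
    simp only [fB_add_left hg, fB_add_right, fB_smul_left, fB_smul_right, vv, va, vb, vw, av, aa,
    ab, bv, ba, bb, wv, hs1, hs2]
  all_goals try ring1
  · linear_combination -ht2
  · linear_combination -ht1
  · linear_combination hr

theorem span_of_vanish {q : ℕ} (hg : GoodExp k q) {A : Matrix (Fin 4) (Fin 4) k}
    {v a b w : Fin 4 → k} (hli : LinearIndependent k ![v, a, b])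
    (va : fB q A v a = 0) (vb : fB q A v b = 0) (vv : fB q A v v = 0) (vw : fB q A v w ≠ 0)
    (z : Fin 4 → k) : ∃ x0 x1 x2 x3 : k, z = x0 • v + x1 • a + x2 • b + x3 • w := by
  have hli4 : LinearIndependent k ![v, a, b, w] := by
    rw [Fintype.linearIndependent_iff] at hli ⊢
    intro g hgs
    simp [Fin.sum_univ_four] at hgs
    have h := congrArg (fB q A v) hgs
    have h0 : fB q A v 0 = 0 := by simp [fB]
    simp only [fB_add_right, fB_smul_right, vv, va, vb, h0] at h
    have h3 : g 3 = 0 := by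
      simpa [vw] using h
    have := hli ![g 0, g 1, g 2] (by simpa [Fin.sum_univ_three, h3] using hgs)
    intro i
    fin_cases i
    · exact this 0
    · exact this 1
    · exact this 2
    · exact h3
  have htop : Submodule.span k (Set.range ![v, a, b, w]) = ⊤ :=
    hli4.span_eq_top_of_card_eq_finrank (by simp)
  have hz : z ∈ Submodule.span k (Set.range ![v, a, b, w]) := htop ▸ Submodule.mem_top
  rw [Submodule.mem_span_range_iff_exists_fun] at hz
  obtain ⟨c, hc⟩ := hz
  refine ⟨c 0, c 1, c 2, c 3, ?_⟩
  rw [← hc]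
  simp [Fin.sum_univ_four]

theorem fB_ab_ne [IsAlgClosed k] {q : ℕ} (hg : GoodExp k q) {A : Matrix (Fin 4) (Fin 4) k}
    (hA : IsUnit A)
    {v a b w : Fin 4 → k} (hli : LinearIndependent k ![v, a, b])
    (va : fB q A v a = 0) (vb : fB q A v b = 0) (vv : fB q A v v = 0) (vw : fB q A v w ≠ 0)
    (av : fB q A a v = 0) (aa : fB q A a a = 0) : fB q A a b ≠ 0 := by
  intro ab
  obtain ⟨s, hs⟩ := IsAlgClosed.exists_pow_nat_eq (fB q A a w / fB q A v w)
    (show 0 < q by have := hg.1; omega)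
  have hx : a + (-s) • v = 0 := by
    apply fB_nondeg_left hg hA
    intro y
    obtain ⟨x0, x1, x2, x3, rfl⟩ := span_of_vanish hg hli va vb vv vw y
    simp only [fB_add_left hg, fB_add_right, fB_smul_left, fB_smul_right, vv, va, vb, av, aa, ab,
      hg.neg, hs]
    field_simp
    ring
  rw [Fintype.linearIndependent_iff] at hli
  have := hli ![-s, 1, 0] (by simpa [Fin.sum_univ_three, add_comm] using hx) 1
  simp at this

theorem exists_frame [IsAlgClosed k] {q : ℕ} (hg : GoodExp k q) {A : Matrix (Fin 4) (Fin 4) k}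
    (hA : IsUnit A)
    {v a b : Fin 4 → k} (hli : LinearIndependent k ![v, a, b])
    (vv : fB q A v v = 0) (va : fB q A v a = 0) (vb : fB q A v b = 0)
    (av : fB q A a v = 0) (aa : fB q A a a = 0)
    (bv : fB q A b v = 0) (bb : fB q A b b = 0) :
    ∃ t : k, t ≠ 0 ∧ ∃ a' b' w', Frame q A (t • v) a' b' w' := by
  have hv : v ≠ 0 := hli.ne_zero 0
  obtain ⟨w, vw⟩ : ∃ w, fB q A v w ≠ 0 := by
    by_contra! h
    exact hv (fB_nondeg_left hg hA h)
  have wv : fB q A w v ≠ 0 := by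
    intro wv
    apply hv
    apply fB_nondeg_right hg hA
    intro y
    obtain ⟨x0, x1, x2, x3, rfl⟩ := span_of_vanish hg hli va vb vv vw y
    simp only [fB_add_left hg, fB_smul_left, vv, av, bv, wv]
    ring
  have ab := fB_ab_ne hg hA hli va vb vv vw av aa
  have hli' : LinearIndependent k ![v, b, a] := by
    rw [Fintype.linearIndependent_iff] at hli ⊢
    intro g hgs
    have := hli ![g 0, g 2, g 1] (by
      simp [Fin.sum_univ_three] at hgs ⊢
      rw [← hgs]; abel)
    intro i
    fin_cases i
    · exact this 0
    · exact this 2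
    · exact this 1
  have ba := fB_ab_ne hg hA hli' vb va vv vw bv bb
  obtain ⟨α, β, hα, hβ, h1, h2⟩ := exists_scale hg vw wv
  obtain ⟨γ, δ, hγ, hδ, h3, h4⟩ := exists_scale hg ab ba
  refine ⟨α, hα, ?_⟩
  apply frame_step hg (v := α • v) (a := γ • a) (b := δ • b) (w := β • w) <;>
    simp only [fB_smul_left, fB_smul_right, vv, va, vb, av, aa, bv, bb, mul_zero]
  · linear_combination h1
  · linear_combination h3
  · linear_combination h4
  · linear_combination h2

theorem Frame.linearIndependent {q : ℕ} {A : Matrix (Fin 4) (Fin 4) k} {v a b w : Fin 4 → k}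
    (h : Frame q A v a b w) : LinearIndependent k ![v, a, b, w] := by
  rw [Fintype.linearIndependent_iff]
  intro g hgs
  simp [Fin.sum_univ_four] at hgs
  have h0 : ∀ x, fB q A x 0 = 0 := by simp [fB]
  have e0 := congrArg (fB q A v) hgs
  have e1 := congrArg (fB q A a) hgs
  have e2 := congrArg (fB q A b) hgs
  have e3 := congrArg (fB q A w) hgs
  simp only [fB_add_right, fB_smul_right, h0, h.vv, h.va, h.vb, h.vw, h.av, h.aa, h.ab, h.aw,
    h.bv, h.ba, h.bb, h.bw, h.wv, h.wa, h.wb, h.ww, mul_zero, mul_one, add_zero, zero_add]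
    at e0 e1 e2 e3
  intro i
  fin_cases i <;> assumption

/-- The basis attached to a frame. -/
noncomputable def Frame.basis {q : ℕ} {A : Matrix (Fin 4) (Fin 4) k} {v a b w : Fin 4 → k}
    (h : Frame q A v a b w) : Basis (Fin 4) k (Fin 4 → k) :=
  basisOfLinearIndependentOfCardEqFinrank h.linearIndependent (by simp)

theorem Frame.coe_basis {q : ℕ} {A : Matrix (Fin 4) (Fin 4) k} {v a b w : Fin 4 → k}
    (h : Frame q A v a b w) : ⇑h.basis = ![v, a, b, w] := by
  simp [Frame.basis]

theorem Frame.repr {q : ℕ} {A : Matrix (Fin 4) (Fin 4) k} {v a b w : Fin 4 → k}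
    (h : Frame q A v a b w) (z : Fin 4 → k) :
    ∃ x0 x1 x2 x3 : k, z = x0 • v + x1 • a + x2 • b + x3 • w := by
  refine ⟨h.basis.repr z 0, h.basis.repr z 1, h.basis.repr z 2, h.basis.repr z 3, ?_⟩
  conv_lhs => rw [← h.basis.sum_repr z]
  simp [Fin.sum_univ_four, h.coe_basis]

theorem Frame.form {q : ℕ} (hg : GoodExp k q) {A : Matrix (Fin 4) (Fin 4) k}
    {v a b w : Fin 4 → k} (h : Frame q A v a b w) (x0 x1 x2 x3 : k) :
    frobForm q A (x0 • v + x1 • a + x2 • b + x3 • w) =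
      x0 ^ q * x3 + x1 ^ q * x2 + x2 ^ q * x1 + x3 ^ q * x0 := by
  change fB q A _ _ = _
  simp only [fB_add_left hg, fB_add_right, fB_smul_left, fB_smul_right,
    h.vv, h.va, h.vb, h.vw, h.av, h.aa, h.ab, h.aw,
    h.bv, h.ba, h.bb, h.bw, h.wv, h.wa, h.wb, h.ww]
  ring

theorem frame_equiv {q : ℕ} (hg : GoodExp k q) {A : Matrix (Fin 4) (Fin 4) k}
    {v a b w v' a' b' w' : Fin 4 → k} (h : Frame q A v a b w) (h' : Frame q A v' a' b' w') :
    ∃ g : (Fin 4 → k) ≃ₗ[k] (Fin 4 → k), PreservesCone (extremalCone k q A) g ∧ g v = v' := by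
  let g := h.basis.equiv h'.basis (Equiv.refl _)
  have hb : ∀ i, g (![v, a, b, w] i) = ![v', a', b', w'] i := by
    intro i
    rw [← h.coe_basis, ← h'.coe_basis]
    simp [g]
  have g0 : g v = v' := hb 0
  have g1 : g a = a' := hb 1
  have g2 : g b = b' := hb 2
  have g3 : g w = w' := hb 3
  have key : ∀ z, frobForm q A (g z) = frobForm q A z := by
    intro z
    obtain ⟨x0, x1, x2, x3, rfl⟩ := h.repr z
    rw [h.form hg]
    simp only [map_add, map_smul, g0, g1, g2, g3]
    rw [h'.form hg]
  refine ⟨g, ?_, g0⟩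
  ext z
  constructor
  · rintro ⟨y, hy, rfl⟩
    exact (key y).trans hy
  · intro hz
    refine ⟨g.symm z, ?_, by simp⟩
    have := key (g.symm z)
    rw [LinearEquiv.apply_symm_apply] at this
    exact this.symm.trans hz

theorem star_frame [IsAlgClosed k] {q : ℕ} (hg : GoodExp k q) {A : Matrix (Fin 4) (Fin 4) k}
    (hA : IsUnit A) {c : Submodule k (Fin 4 → k)}
    (hc : IsStarPoint q (extremalCone k q A) c) :
    ∃ v a b w, Frame q A v a b w ∧ c = k ∙ v := by
  obtain ⟨S, hc1, hcard, hS⟩ := hc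
  obtain ⟨L1, hL1, L2, hL2, hne⟩ := (Set.one_lt_ncard_iff_nontrivial_and_finite.1
    (show 1 < S.ncard by have := hg.1; omega)).1
  obtain ⟨v, hv0, hcv⟩ : ∃ v : Fin 4 → k, v ≠ 0 ∧ c = k ∙ v := by
    obtain ⟨v, hv0, hv⟩ := finrank_eq_one_iff'.1 hc1
    refine ⟨v, by simpa using hv0, le_antisymm ?_ ?_⟩
    · intro x hx
      obtain ⟨t, ht⟩ := hv ⟨x, hx⟩
      exact Submodule.mem_span_singleton.2 ⟨t, congrArg Subtype.val ht⟩
    · rw [Submodule.span_singleton_le_iff_mem]; exact v.2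
  obtain ⟨⟨hf1, hX1⟩, hc1⟩ := hS L1 hL1
  obtain ⟨⟨hf2, hX2⟩, hc2⟩ := hS L2 hL2
  unfold IsLine at hf1 hf2
  have hvc : v ∈ c := hcv ▸ Submodule.mem_span_singleton_self v
  have n12 : ¬ L1 ≤ L2 := fun h => hne (Submodule.eq_of_le_of_finrank_eq h (by omega))
  have n21 : ¬ L2 ≤ L1 := fun h => hne (Submodule.eq_of_le_of_finrank_eq h (by omega)).symm
  obtain ⟨a, ha1, ha2⟩ := SetLike.not_le_iff_exists.1 n12
  obtain ⟨b, hb2, hb1⟩ := SetLike.not_le_iff_exists.1 n21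
  have hv1 := hc1 hvc
  have hv2 := hc2 hvc
  have hli : LinearIndependent k ![v, a, b] := by
    rw [Fintype.linearIndependent_iff]
    intro g hgs
    simp [Fin.sum_univ_three] at hgs
    have e1 : g 1 = 0 := by
      by_contra h
      apply ha2
      rw [← L2.smul_mem_iff h]
      have : g 1 • a = -(g 0 • v + g 2 • b) := by
        rw [eq_neg_iff_add_eq_zero, ← hgs]; abel
      rw [this]
      exact L2.neg_mem (L2.add_mem (L2.smul_mem _ hv2) (L2.smul_mem _ hb2))
    have e2 : g 2 = 0 := by
      by_contra h
      apply hb1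
      rw [← L1.smul_mem_iff h]
      have : g 2 • b = -(g 0 • v + g 1 • a) := by
        rw [eq_neg_iff_add_eq_zero, ← hgs]; abel
      rw [this]
      exact L1.neg_mem (L1.add_mem (L1.smul_mem _ hv1) (L1.smul_mem _ ha1))
    have e0 : g 0 = 0 := by simpa [e1, e2, hv0] using hgs
    intro i
    fin_cases i <;> assumption
  obtain ⟨t, ht, a', b', w', hF⟩ := exists_frame hg hA hli (fB_line hg hX1 hv1 hv1)
    (fB_line hg hX1 hv1 ha1) (fB_line hg hX2 hv2 hb2) (fB_line hg hX1 ha1 hv1)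
    (fB_line hg hX1 ha1 ha1) (fB_line hg hX2 hb2 hv2) (fB_line hg hX2 hb2 hb2)
  refine ⟨t • v, a', b', w', hF, ?_⟩
  rw [hcv]
  exact (Submodule.span_singleton_smul_eq (IsUnit.mk0 t ht) v).symm

theorem lines_bound [IsAlgClosed k] {q : ℕ} (hg : GoodExp k q) {A : Matrix (Fin 4) (Fin 4) k}
    {v a b w : Fin 4 → k} (h : Frame q A v a b w) :
    {L | IsLineOn (extremalCone k q A) L ∧ k ∙ v ≤ L}.Finite ∧
    {L | IsLineOn (extremalCone k q A) L ∧ k ∙ v ≤ L}.ncard ≤ q + 1 := by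
  classical
  have hq := hg.1
  let P : Polynomial k := Polynomial.X ^ q + Polynomial.X
  have hdeg : P.degree = q := by
    simp only [P]
    rw [Polynomial.degree_add_eq_left_of_degree_lt, Polynomial.degree_X_pow]
    rw [Polynomial.degree_X_pow, Polynomial.degree_X]
    exact_mod_cast hq
  have hP0 : P ≠ 0 := by
    intro h0; rw [h0] at hdeg; simp at hdeg
  let T : Finset (Submodule k (Fin 4 → k)) :=
    insert (Submodule.span k {v, a})
      (P.roots.toFinset.image fun s => Submodule.span k {v, s • a + b})
  have hT : T.card ≤ q + 1 := by
    refine (Finset.card_insert_le _ _).trans ?_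
    refine Nat.add_le_add_right (Finset.card_image_le.trans ?_) 1
    refine (Multiset.toFinset_card_le _).trans ?_
    refine (Polynomial.card_roots' P).trans ?_
    exact (Polynomial.natDegree_eq_of_degree_eq_some hdeg).le
  have hli := h.linearIndependent
  rw [Fintype.linearIndependent_iff] at hli
  -- a line through `v` and an independent vector
  have hspan : ∀ (L : Submodule k (Fin 4 → k)) (u : Fin 4 → k), finrank k L = 2 → v ∈ L → u ∈ L →
      LinearIndependent k ![v, u] → L = Submodule.span k {v, u} := by
    intro L u hL hv hu hlu
    symm
    apply Submodule.eq_of_le_of_finrank_eq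
    · rw [Submodule.span_le]
      rintro x (rfl | rfl)
      · exact hv
      · exact hu
    · rw [hL]
      have := finrank_span_eq_card hlu
      have hr : Set.range ![v, u] = {v, u} := by
        ext x
        simp only [Set.mem_range, Fin.exists_fin_two, Set.mem_insert_iff, Set.mem_singleton_iff]
        simp [eq_comm]
      rw [hr] at this
      simpa using this
  have hsub : {L | IsLineOn (extremalCone k q A) L ∧ k ∙ v ≤ L} ⊆ (T : Set _) := by
    rintro L ⟨⟨hf, hX⟩, hv⟩
    unfold IsLine at hf
    rw [Submodule.span_singleton_le_iff_mem] at hv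
    have hn : ¬ L ≤ k ∙ v := by
      intro hle
      have h1 := Submodule.finrank_mono hle
      have h2 := finrank_span_le_card (R := k) ({v} : Set (Fin 4 → k))
      simp at h2
      omega
    obtain ⟨u, huL, hu⟩ := SetLike.not_le_iff_exists.1 hn
    obtain ⟨x0, x1, x2, x3, hu'⟩ := h.repr u
    have h3 : x3 = 0 := by
      have := fB_line hg hX hv huL
      rw [hu'] at this
      simpa [fB_add_right, fB_smul_right, h.vv, h.va, h.vb, h.vw] using this
    have hu2 : x1 • a + x2 • b ∈ L := by
      have : x1 • a + x2 • b = u - x0 • v := by rw [hu', h3]; simp; abel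
      rw [this]
      exact L.sub_mem huL (L.smul_mem _ hv)
    have hform : x1 ^ q * x2 + x2 ^ q * x1 = 0 := by
      have h1 : frobForm q A (x1 • a + x2 • b) = 0 := hX hu2
      have h2 := h.form hg 0 x1 x2 0
      have hq0 : q ≠ 0 := by omega
      simp only [zero_smul, zero_add, add_zero, h1, mul_zero, zero_mul] at h2
      exact h2.symm
    by_cases hx2 : x2 = 0
    · have hx1 : x1 ≠ 0 := by
        rintro rfl
        apply hu
        rw [hu', h3, hx2]
        exact Submodule.mem_span_singleton.2 ⟨x0, by simp⟩
      have haL : a ∈ L := by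
        rw [hx2, zero_smul, add_zero] at hu2
        exact (L.smul_mem_iff hx1).1 hu2
      have := hspan L a hf hv haL (by
        rw [Fintype.linearIndependent_iff]
        intro g hgs
        have := hli ![g 0, g 1, 0, 0] (by simpa [Fin.sum_univ_four] using hgs)
        intro i
        fin_cases i
        · exact this 0
        · exact this 1)
      rw [this]
      simp [T]
    · have hmem : (x1 / x2) • a + b ∈ L := by
        rw [← L.smul_mem_iff hx2, smul_add, smul_smul, mul_div_cancel₀ _ hx2]
        exact hu2
      have := hspan L _ hf hv hmem (by
        rw [Fintype.linearIndependent_iff]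
        intro g hgs
        have := hli ![g 0, g 1 * (x1 / x2), g 1, 0] (by
          simpa [Fin.sum_univ_four, smul_smul, add_assoc] using hgs)
        intro i
        fin_cases i
        · exact this 0
        · exact this 2)
      rw [this]
      have hroot : x1 / x2 ∈ P.roots.toFinset := by
        rw [Multiset.mem_toFinset, Polynomial.mem_roots hP0]
        simp only [P, Polynomial.IsRoot, Polynomial.eval_add, Polynomial.eval_pow,
          Polynomial.eval_X, div_pow]
        field_simp
        linear_combination hform
      rw [Finset.mem_coe]
      exact Finset.mem_insert_of_mem (Finset.mem_image_of_mem _ hroot)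
  refine ⟨T.finite_toSet.subset hsub, ?_⟩
  refine (Set.ncard_le_ncard hsub T.finite_toSet).trans ?_
  rw [Set.ncard_coe_finset]
  exact hT

end Helpers

/-- `Aut(X)` acts transitively on the star points of a
smooth extremal surface `X` of degree `q+1`, and equivalently on its stars:
an element of `Aut(X) ⊆ PGL(4,k)` is represented by an invertible linear map
`g` of `k⁴` mapping the affine cone of `X` onto itself. -/
theorem aut_transitive_on_star_points {k : Type*} [Field k] [IsAlgClosed k]
    (p e q : ℕ) (hp : p.Prime) (hchar : CharP k p) (he : 1 ≤ e) (hq : q = p ^ e)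
    (A : Matrix (Fin 4) (Fin 4) k) (hA : IsUnit A) :
    (∀ c c' : Submodule k (Fin 4 → k),
      IsStarPoint q (extremalCone k q A) c → IsStarPoint q (extremalCone k q A) c' →
        ∃ g : (Fin 4 → k) ≃ₗ[k] (Fin 4 → k),
          PreservesCone (extremalCone k q A) g ∧
            Submodule.map (g : (Fin 4 → k) →ₗ[k] (Fin 4 → k)) c = c') ∧
    (∀ S S' : Set (Submodule k (Fin 4 → k)),
      IsStar q (extremalCone k q A) S → IsStar q (extremalCone k q A) S' →
        ∃ g : (Fin 4 → k) ≃ₗ[k] (Fin 4 → k),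
          PreservesCone (extremalCone k q A) g ∧
            (fun L => Submodule.map (g : (Fin 4 → k) →ₗ[k] (Fin 4 → k)) L) '' S = S') := by
  have hg : GoodExp k q := by
    have := Fact.mk hp
    subst hq
    refine ⟨?_, fun x y => add_pow_char_pow x y p e⟩
    calc 2 ≤ p := hp.two_le
      _ = p ^ 1 := (pow_one p).symm
      _ ≤ p ^ e := Nat.pow_le_pow_right hp.pos he
  have main : ∀ c c' : Submodule k (Fin 4 → k),
      IsStarPoint q (extremalCone k q A) c → IsStarPoint q (extremalCone k q A) c' →
        ∃ g : (Fin 4 → k) ≃ₗ[k] (Fin 4 → k),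
          PreservesCone (extremalCone k q A) g ∧
            Submodule.map (g : (Fin 4 → k) →ₗ[k] (Fin 4 → k)) c = c' := by
    intro c c' hc hc'
    obtain ⟨v, a, b, w, hF, rfl⟩ := star_frame hg hA hc
    obtain ⟨v', a', b', w', hF', rfl⟩ := star_frame hg hA hc'
    obtain ⟨g, hgX, hgv⟩ := frame_equiv hg hF hF'
    refine ⟨g, hgX, ?_⟩
    rw [Submodule.map_span, Set.image_singleton]
    simp [hgv]
  refine ⟨main, ?_⟩
  rintro S S' ⟨c, hS⟩ ⟨c', hS'⟩
  obtain ⟨g, hgX, hgc⟩ := main c c' ⟨S, hS⟩ ⟨S', hS'⟩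
  refine ⟨g, hgX, ?_⟩
  obtain ⟨v', a', b', w', hF', hc'⟩ := star_frame hg hA ⟨S', hS'⟩
  obtain ⟨hfin, hcard⟩ := lines_bound hg hF'
  rw [← hc'] at hfin hcard
  have h1 : S' = {L | IsLineOn (extremalCone k q A) L ∧ c' ≤ L} :=
    Set.eq_of_subset_of_ncard_le (fun L hL => hS'.2.2 L hL) (by rw [hS'.2.1]; exact hcard) hfin
  have h2 : (fun L => Submodule.map (g : (Fin 4 → k) →ₗ[k] (Fin 4 → k)) L) '' S
      = {L | IsLineOn (extremalCone k q A) L ∧ c' ≤ L} := by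
    apply Set.eq_of_subset_of_ncard_le _ _ hfin
    · rintro _ ⟨L, hL, rfl⟩
      obtain ⟨⟨hf, hX⟩, hcL⟩ := hS.2.2 L hL
      refine ⟨⟨?_, ?_⟩, ?_⟩
      · exact (LinearEquiv.finrank_map_eq g L).trans hf
      · rintro _ ⟨y, hy, rfl⟩
        rw [← hgX]
        exact ⟨y, hX hy, rfl⟩
      · rw [← hgc]
        exact Submodule.map_mono hcL
    · rw [Set.ncard_image_of_injective _ (Submodule.map_injective_of_injective g.injective),
        hS.2.1]
      exact hcard
  rw [h1, h2]
end

section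
/- Let X be a smooth extremal surface of degree q+1 in ℙ³(k). Then Aut(X) acts transitively on the set of pairs (H, L) where H is a star plane of X and L is a line of the star X ∩ H: for any two such pairs (H, L) and (H', L') there exists g ∈ Aut(X) with g(H) = H' and g(L) = L'. In particular, Aut(X) acts transitively on the set of all lines on X. -/
open Module

section Helpers

variable {k : Type*} [Field k]

theorem ex_root_one [IsAlgClosed k] (n : ℕ) (hn : 2 ≤ n) (c d : k) :
    ∃ x : k, x ^ n + c * x + d = 0 := by
  have hdeg : (Polynomial.X ^ n + (Polynomial.C c * Polynomial.X + Polynomial.C d) :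
      Polynomial k).degree = n := by
    rw [Polynomial.degree_add_eq_left_of_degree_lt]
    · simp
    · rw [Polynomial.degree_X_pow]
      refine lt_of_le_of_lt Polynomial.degree_linear_le ?_
      exact_mod_cast hn
  obtain ⟨x, hx⟩ := IsAlgClosed.exists_root _ (by
    rw [hdeg]; exact_mod_cast (by omega : n ≠ 0))
  refine ⟨x, ?_⟩
  simpa [Polynomial.IsRoot, add_assoc] using hx

theorem ex_root_two [IsAlgClosed k] (m n : ℕ) (hn : 1 ≤ n) (hmn : n < m) (a b : k) (ha : a ≠ 0) :
    ∃ y : k, y ≠ 0 ∧ a * y ^ m + b * y ^ n = 1 := by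
  have hdeg : (Polynomial.C a * Polynomial.X ^ m + (Polynomial.C b * Polynomial.X ^ n +
      Polynomial.C (-1)) : Polynomial k).degree = m := by
    rw [Polynomial.degree_add_eq_left_of_degree_lt]
    · exact Polynomial.degree_C_mul_X_pow m ha
    · rw [Polynomial.degree_C_mul_X_pow m ha]
      refine lt_of_le_of_lt (Polynomial.degree_add_le _ _) (max_lt ?_ ?_)
      · refine lt_of_le_of_lt (Polynomial.degree_C_mul_X_pow_le _ _) ?_
        exact_mod_cast hmn
      · refine lt_of_le_of_lt Polynomial.degree_C_le ?_
        exact_mod_cast (by omega : 0 < m)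
  obtain ⟨x, hx⟩ := IsAlgClosed.exists_root _ (by
    rw [hdeg]; exact_mod_cast (by omega : m ≠ 0))
  have hx' : a * x ^ m + (b * x ^ n + -1) = 0 := by
    simpa [Polynomial.IsRoot] using hx
  refine ⟨x, ?_, by linear_combination hx'⟩
  rintro rfl
  rw [zero_pow (by omega), zero_pow (by omega)] at hx'
  simp at hx'

theorem finrank_pair {V : Type*} [AddCommGroup V] [Module k V] (v w : V)
    (h : LinearIndependent k ![v, w]) : finrank k (Submodule.span k {v, w}) = 2 := by
  have := finrank_span_eq_card h
  rw [Matrix.range_cons_cons_empty] at this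
  simpa using this

theorem exists_pair {V : Type*} [AddCommGroup V] [Module k V] [FiniteDimensional k V]
    (L : Submodule k V) (hL : finrank k L = 2)
    (v : V) (hv : v ∈ L) (hv0 : v ≠ 0) :
    ∃ w ∈ L, LinearIndependent k ![v, w] ∧ L = Submodule.span k {v, w} := by
  have : ∃ w ∈ L, w ∉ Submodule.span k {v} := by
    by_contra! h
    have h1 : L ≤ Submodule.span k {v} := h
    have h2 := Submodule.finrank_mono h1
    rw [finrank_span_singleton hv0] at h2
    omega
  obtain ⟨w, hw, hwv⟩ := this
  have hli : LinearIndependent k ![v, w] := by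
    rw [LinearIndependent.pair_iff' hv0]
    intro a ha
    exact hwv (Submodule.mem_span_singleton.2 ⟨a, ha⟩)
  refine ⟨w, hw, hli, ?_⟩
  symm
  apply Submodule.eq_of_le_of_finrank_eq
  · rw [Submodule.span_le]
    rintro x (rfl | rfl) <;> assumption
  · rw [hL]; exact finrank_pair _ _ hli

/-- Existence of an eigenvector for a semilinear injective map on a 2-dimensional space. -/
theorem exists_eigen [IsAlgClosed k] {V : Type*} [AddCommGroup V] [Module k V]
    [FiniteDimensional k V] (Q : ℕ) (hQ : 2 ≤ Q) (F : V → V)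
    (hadd : ∀ x y, F (x + y) = F x + F y) (hsm : ∀ (a : k) x, F (a • x) = a ^ Q • F x)
    (hinj : Function.Injective F)
    (L : Submodule k V) (hL : finrank k L = 2) (hFL : ∀ x ∈ L, F x ∈ L) :
    ∃ v ∈ L, v ≠ 0 ∧ ∃ l : k, F v = l • v := by
  have hne : L ≠ ⊥ := by
    rintro rfl
    simp at hL
  obtain ⟨w, hw, hw0⟩ := Submodule.exists_mem_ne_zero_of_ne_bot hne
  by_cases hc : ∃ l : k, F w = l • w
  · exact ⟨w, hw, hw0, hc⟩
  have hli : LinearIndependent k ![w, F w] := by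
    rw [LinearIndependent.pair_iff' hw0]
    intro a ha
    exact hc ⟨a, ha.symm⟩
  have hspan : Submodule.span k {w, F w} = L := by
    apply Submodule.eq_of_le_of_finrank_eq
    · rw [Submodule.span_le]
      rintro x (rfl | rfl)
      · exact hw
      · exact hFL _ hw
    · rw [hL]; exact finrank_pair _ _ hli
  have h2 : F (F w) ∈ Submodule.span k {w, F w} := by
    rw [hspan]; exact hFL _ (hFL _ hw)
  obtain ⟨a, b, hab⟩ := Submodule.mem_span_pair.1 h2
  have ha : a ≠ 0 := by
    rintro rfl
    obtain ⟨t, ht⟩ := IsAlgClosed.exists_pow_nat_eq b (n := Q) (by omega)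
    have : F (t • w) = F (F w) := by
      rw [hsm, ht, ← hab]; simp
    exact hc ⟨t, (hinj this).symm⟩
  obtain ⟨y, hy0, hy⟩ := ex_root_two (Q * Q - 1) (Q - 1) (by omega) (by
    have : Q * 2 ≤ Q * Q := Nat.mul_le_mul_left _ hQ
    omega) (a ^ Q) b (pow_ne_zero _ ha)
  have hy' : (a * y ^ Q) ^ Q + b * y ^ Q = y := by
    have h1 : y ^ (Q * Q) = y ^ (Q * Q - 1) * y := by
      rw [← pow_succ]; congr 1
      have : 0 < Q * Q := by positivity
      omega
    have h2 : y ^ Q = y ^ (Q - 1) * y := by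
      rw [← pow_succ]; congr 1; omega
    rw [mul_pow, ← pow_mul, h1, h2]
    linear_combination y * hy
  refine ⟨(a * y ^ Q) • w + y • F w, ?_, ?_, 1, ?_⟩
  · exact L.add_mem (L.smul_mem _ hw) (L.smul_mem _ (hFL _ hw))
  · intro h
    exact hy0 ((LinearIndependent.pair_iff.1 hli _ _ h).2)
  · rw [hadd, hsm, hsm, ← hab, one_smul]
    linear_combination (norm := module) hy' • F w

/-- Lang-type statement in dimension two. -/
theorem lang_two [IsAlgClosed k] {V : Type*} [AddCommGroup V] [Module k V]
    [FiniteDimensional k V] (Q : ℕ) (hQ : 2 ≤ Q) (F : V → V)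
    (hadd : ∀ x y, F (x + y) = F x + F y) (hsm : ∀ (a : k) x, F (a • x) = a ^ Q • F x)
    (hinj : Function.Injective F)
    (L : Submodule k V) (hL : finrank k L = 2) (hFL : ∀ x ∈ L, F x ∈ L)
    (v : V) (hv : v ∈ L) (hv0 : v ≠ 0) (l : k) (hl : F v = l • v) :
    ∃ b0 b1 : V, (∃ s : k, b0 = s • v) ∧ F b0 = b0 ∧ F b1 = b1 ∧
      LinearIndependent k ![b0, b1] ∧ L = Submodule.span k {b0, b1} := by
  have hF0 : F 0 = 0 := by
    have := hsm 0 0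
    simpa [zero_pow (by omega : Q ≠ 0)] using this
  have fixscale : ∀ b : k, b ≠ 0 → ∃ s : k, s ≠ 0 ∧ s ^ Q * b = s := by
    intro b hb
    obtain ⟨s, hs⟩ := IsAlgClosed.exists_pow_nat_eq (b⁻¹) (n := Q - 1) (by omega)
    have hs0 : s ≠ 0 := by
      rintro rfl
      rw [zero_pow (by omega)] at hs
      exact inv_ne_zero hb hs.symm
    refine ⟨s, hs0, ?_⟩
    have h2 : s ^ Q = s ^ (Q - 1) * s := by
      rw [← pow_succ]; congr 1; omega
    rw [h2, hs]; field_simp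
  have hl0 : l ≠ 0 := by
    rintro rfl
    apply hv0; apply hinj; rw [hl, hF0, zero_smul]
  obtain ⟨s, hs0, hs⟩ := fixscale l hl0
  set b0 := s • v with hb0
  have hFb0 : F b0 = b0 := by
    rw [hb0, hsm, hl, smul_smul, hs]
  have hb00 : b0 ≠ 0 := smul_ne_zero hs0 hv0
  have hb0L : b0 ∈ L := L.smul_mem _ hv
  obtain ⟨w, hw, hli, hspan⟩ := exists_pair L hL b0 hb0L hb00
  have h2 : F w ∈ Submodule.span k {b0, w} := by
    rw [← hspan]; exact hFL _ hw
  obtain ⟨a, b, hab⟩ := Submodule.mem_span_pair.1 h2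
  have hb : b ≠ 0 := by
    rintro rfl
    obtain ⟨t, ht⟩ := IsAlgClosed.exists_pow_nat_eq a (n := Q) (by omega)
    have : F (t • b0) = F w := by
      rw [hsm, ht, hFb0, ← hab]; simp
    have h3 := hinj this
    exact (LinearIndependent.pair_iff' hb00).1 hli t h3
  obtain ⟨r, hr0, hr⟩ := fixscale b hb
  obtain ⟨x, hx⟩ := ex_root_one Q hQ (-1) (r ^ Q * a)
  have hli2 : LinearIndependent k ![b0, r • w + x • b0] := by
    rw [LinearIndependent.pair_iff]
    intro c d hcd
    have h4 : (c + d * x) • b0 + (d * r) • w = 0 := by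
      rw [← hcd]; module
    obtain ⟨h5, h6⟩ := LinearIndependent.pair_iff.1 hli _ _ h4
    have hd : d = 0 := by
      rcases mul_eq_zero.1 h6 with h | h
      · exact h
      · exact absurd h hr0
    subst hd
    simpa using h5
  refine ⟨b0, r • w + x • b0, ⟨s, rfl⟩, hFb0, ?_, hli2, ?_⟩
  · rw [hadd, hsm, hsm, hFb0, ← hab]
    linear_combination (norm := module) hx • b0 + hr • w
  · symm
    apply Submodule.eq_of_le_of_finrank_eq
    · rw [Submodule.span_le]
      rintro y (rfl | rfl)
      · exact hb0L
      · exact L.add_mem (L.smul_mem _ hw) (L.smul_mem _ hb0L)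
    · rw [hL]; exact finrank_pair _ _ hli2

/-- The sesquilinear form attached to the Frobenius form. -/
def sesq (q : ℕ) (A : Matrix (Fin 4) (Fin 4) k) (x : Fin 4 → k) : (Fin 4 → k) →ₗ[k] k where
  toFun y := ∑ i, ∑ j, A i j * x i ^ q * y j
  map_add' y z := by simp only [Pi.add_apply, mul_add, Finset.sum_add_distrib]
  map_smul' a y := by
    simp only [Pi.smul_apply, smul_eq_mul, RingHom.id_apply, Finset.mul_sum]
    refine Finset.sum_congr rfl fun i _ => Finset.sum_congr rfl fun j _ => by ring

theorem sesq_self (q : ℕ) (A : Matrix (Fin 4) (Fin 4) k) (x : Fin 4 → k) :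
    sesq q A x x = frobForm q A x := rfl

theorem sesq_eq_dot (q : ℕ) (A : Matrix (Fin 4) (Fin 4) k) (x y : Fin 4 → k) :
    sesq q A x y = (fun i => x i ^ q) ⬝ᵥ (A.mulVec y) := by
  simp only [sesq, LinearMap.coe_mk, AddHom.coe_mk, dotProduct, Matrix.mulVec, Finset.mul_sum]
  refine Finset.sum_congr rfl fun i _ => Finset.sum_congr rfl fun j _ => by ring

theorem sesq_smul_left (q : ℕ) (A : Matrix (Fin 4) (Fin 4) k) (a : k) (x y : Fin 4 → k) :
    sesq q A (a • x) y = a ^ q * sesq q A x y := by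
  simp only [sesq, LinearMap.coe_mk, AddHom.coe_mk, Finset.mul_sum, Pi.smul_apply, smul_eq_mul,
    mul_pow]
  refine Finset.sum_congr rfl fun i _ => Finset.sum_congr rfl fun j _ => by ring

theorem sesq_add_left (p e : ℕ) (hp : p.Prime) (hchar : CharP k p)
    (A : Matrix (Fin 4) (Fin 4) k) (x x' y : Fin 4 → k) :
    sesq (p ^ e) A (x + x') y = sesq (p ^ e) A x y + sesq (p ^ e) A x' y := by
  have := Fact.mk hp
  simp only [sesq, LinearMap.coe_mk, AddHom.coe_mk, Pi.add_apply, add_pow_char_pow, mul_add,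
    add_mul, Finset.sum_add_distrib]

theorem sesq_nondeg_right (q : ℕ) (hq : q ≠ 0) [IsAlgClosed k] (A : Matrix (Fin 4) (Fin 4) k)
    (hA : IsUnit A)
    (y : Fin 4 → k) (h : ∀ x, sesq q A x y = 0) : y = 0 := by
  have h1 : A.mulVec y = 0 := by
    apply dotProduct_eq_zero
    intro w
    choose z hz using fun i => IsAlgClosed.exists_pow_nat_eq (w i) (n := q) (by omega)
    have := h z
    rw [sesq_eq_dot] at this
    rw [dotProduct_comm]
    simpa only [hz] using this
  have := Matrix.mulVec_injective_of_isUnit hA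
  apply this
  simpa using h1

theorem sesq_nondeg_left (q : ℕ) (hq : q ≠ 0) (A : Matrix (Fin 4) (Fin 4) k)
    (hA : IsUnit A)
    (x : Fin 4 → k) (h : ∀ y, sesq q A x y = 0) : x = 0 := by
  have h1 : Matrix.vecMul (fun i => x i ^ q) A = 0 := by
    apply dotProduct_eq_zero
    intro w
    have := h w
    rw [sesq_eq_dot, Matrix.dotProduct_mulVec] at this
    exact this
  have h2 : (fun i => x i ^ q) = (0 : Fin 4 → k) := by
    apply Matrix.vecMul_injective_of_isUnit hA
    simpa using h1
  funext i
  exact (pow_eq_zero_iff hq).1 (congrFun h2 i)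

theorem exists_F (p e : ℕ) (hp : p.Prime) (hchar : CharP k p)
    (A : Matrix (Fin 4) (Fin 4) k) (hA : IsUnit A) (v : Fin 4 → k) :
    ∃ u, ∀ y, sesq (p ^ e) A y u = (sesq (p ^ e) A v y) ^ (p ^ e) := by
  have := Fact.mk hp
  obtain ⟨u, hu⟩ := (Matrix.mulVec_surjective_iff_isUnit.2 hA)
    (fun i => (Matrix.vecMul (fun i => v i ^ (p ^ e)) A i) ^ (p ^ e))
  refine ⟨u, fun y => ?_⟩
  rw [sesq_eq_dot, sesq_eq_dot, hu, Matrix.dotProduct_mulVec, dotProduct, dotProduct,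
    sum_pow_char_pow]
  exact Finset.sum_congr rfl fun i _ => by rw [mul_pow, mul_comm]

theorem exists_F_map [IsAlgClosed k] (p e : ℕ) (hp : p.Prime) (hchar : CharP k p)
    (A : Matrix (Fin 4) (Fin 4) k) (hA : IsUnit A) :
    ∃ F : (Fin 4 → k) → (Fin 4 → k),
      (∀ v y, sesq (p ^ e) A y (F v) = (sesq (p ^ e) A v y) ^ (p ^ e)) ∧
      (∀ x y, F (x + y) = F x + F y) ∧
      (∀ (a : k) x, F (a • x) = a ^ (p ^ e * p ^ e) • F x) ∧
      Function.Injective F := by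
  have := Fact.mk hp
  have hq0 : p ^ e ≠ 0 := pow_ne_zero _ hp.ne_zero
  choose F hF using exists_F p e hp hchar A hA
  have huniq : ∀ u w, (∀ y, sesq (p ^ e) A y u = sesq (p ^ e) A y w) → u = w := by
    intro u w h
    rw [← sub_eq_zero]
    apply sesq_nondeg_right (p ^ e) hq0 A hA
    intro x
    rw [map_sub, h, sub_self]
  refine ⟨F, hF, ?_, ?_, ?_⟩
  · intro x y
    apply huniq
    intro z
    rw [map_add, hF, hF, hF, sesq_add_left p e hp hchar, add_pow_char_pow]
  · intro a x
    apply huniq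
    intro z
    rw [map_smul, hF, hF, sesq_smul_left, mul_pow, ← pow_mul, smul_eq_mul]
  · intro x y hxy
    have h1 : ∀ z, sesq (p ^ e) A (x + (-1 : k) • y) z = 0 := by
      intro z
      have h2 : (sesq (p ^ e) A (x + (-1 : k) • y) z) ^ (p ^ e) = 0 := by
        have h3 := hF x z
        have h4 := hF y z
        rw [hxy] at h3
        rw [sesq_add_left p e hp hchar, sesq_smul_left, add_pow_char_pow, mul_pow, ← h3, ← h4]
        have h5 : ((-1 : k) ^ p ^ e) = -1 := by
          have h6 := add_pow_char_pow (p := p) (n := e) (1 : k) (-1)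
          rw [add_neg_cancel, zero_pow hq0, one_pow] at h6
          linear_combination -h6
        rw [h5, h5]; ring
      exact (pow_eq_zero_iff hq0).1 h2
    have h7 := sesq_nondeg_left (p ^ e) hq0 A hA _ h1
    have : x = y := by
      rw [← sub_eq_zero, ← h7]; module
    exact this

theorem isotropic [IsAlgClosed k] (p e : ℕ) (hp : p.Prime) (hchar : CharP k p) (he : 1 ≤ e)
    (A : Matrix (Fin 4) (Fin 4) k) (L : Submodule k (Fin 4 → k))
    (hL : (L : Set (Fin 4 → k)) ⊆ extremalCone k (p ^ e) A)
    (x y : Fin 4 → k) (hx : x ∈ L) (hy : y ∈ L) : sesq (p ^ e) A x y = 0 := by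
  have hz : ∀ z ∈ L, sesq (p ^ e) A z z = 0 := fun z hz => hL hz
  have hq2 : 2 ≤ p ^ e := le_trans hp.two_le (Nat.le_self_pow (by omega) p)
  obtain ⟨t, ht⟩ := ex_root_one (k := k) (p ^ e) hq2 (-1) (-1)
  have key : ∀ t : k, t * sesq (p ^ e) A x y + t ^ (p ^ e) * sesq (p ^ e) A y x = 0 := by
    intro t
    have h := hz (x + t • y) (L.add_mem hx (L.smul_mem _ hy))
    rw [sesq_add_left p e hp hchar, sesq_smul_left, map_add, map_add, map_smul, map_smul,
      hz x hx, hz y hy, smul_eq_mul, smul_eq_mul] at h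
    linear_combination h
  have h1 := key 1
  have h2 := key t
  rw [one_pow] at h1
  linear_combination t ^ (p ^ e) * h1 - h2 - sesq (p ^ e) A x y * ht

theorem sesq_surj [IsAlgClosed k] (p e : ℕ) (hp : p.Prime) (hchar : CharP k p)
    (A : Matrix (Fin 4) (Fin 4) k) (hA : IsUnit A) (v w : Fin 4 → k)
    (h : LinearIndependent k ![v, w]) :
    Function.Surjective ((sesq (p ^ e) A v).prod (sesq (p ^ e) A w)) := by
  have hq0 : p ^ e ≠ 0 := pow_ne_zero _ hp.ne_zero
  rw [← LinearMap.range_eq_top]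
  by_contra hne
  obtain ⟨f, hf0, hf⟩ := Submodule.exists_le_ker_of_lt_top _ (lt_top_iff_ne_top.2 hne)
  have hf' : ∀ y, sesq (p ^ e) A v y * f (1, 0) + sesq (p ^ e) A w y * f (0, 1) = 0 := by
    intro y
    have h1 : f (sesq (p ^ e) A v y, sesq (p ^ e) A w y) = 0 :=
      hf ⟨y, rfl⟩
    have h2 : ((sesq (p ^ e) A v y, sesq (p ^ e) A w y) : k × k) =
        sesq (p ^ e) A v y • ((1, 0) : k × k) + sesq (p ^ e) A w y • ((0, 1) : k × k) := by
      simp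
    rw [h2, map_add, map_smul, map_smul] at h1
    exact h1
  obtain ⟨c, hc⟩ := IsAlgClosed.exists_pow_nat_eq (f (1, 0)) (Nat.pos_of_ne_zero hq0)
  obtain ⟨d, hd⟩ := IsAlgClosed.exists_pow_nat_eq (f (0, 1)) (Nat.pos_of_ne_zero hq0)
  have h3 : c • v + d • w = 0 := by
    apply sesq_nondeg_left (p ^ e) hq0 A hA
    intro y
    rw [sesq_add_left p e hp hchar, sesq_smul_left, sesq_smul_left, hc, hd]
    linear_combination hf' y
  obtain ⟨h4, h5⟩ := LinearIndependent.pair_iff.1 h _ _ h3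
  rw [h4, zero_pow hq0] at hc
  rw [h5, zero_pow hq0] at hd
  apply hf0
  refine LinearMap.ext fun x => ?_
  have h2 : x = x.1 • ((1, 0) : k × k) + x.2 • ((0, 1) : k × k) := by
    simp
  rw [h2, map_add, map_smul, map_smul, ← hc, ← hd]
  simp

theorem perp_line [IsAlgClosed k] (p e : ℕ) (hp : p.Prime) (hchar : CharP k p) (he : 1 ≤ e)
    (A : Matrix (Fin 4) (Fin 4) k) (hA : IsUnit A) (L : Submodule k (Fin 4 → k))
    (hL : IsLineOn (extremalCone k (p ^ e) A) L)
    (y : Fin 4 → k) (hy : ∀ x ∈ L, sesq (p ^ e) A x y = 0) : y ∈ L := by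
  have hL2 : finrank k L = 2 := hL.1
  have hne : L ≠ ⊥ := by
    rintro rfl
    simp at hL2
  obtain ⟨v, hv, hv0⟩ := Submodule.exists_mem_ne_zero_of_ne_bot hne
  obtain ⟨w, hw, hli, -⟩ := exists_pair L hL2 v hv hv0
  have hs := sesq_surj p e hp hchar A hA v w hli
  have h1 := LinearMap.finrank_range_add_finrank_ker
    ((sesq (p ^ e) A v).prod (sesq (p ^ e) A w))
  rw [LinearMap.range_eq_top.2 hs, finrank_top] at h1
  simp only [finrank_prod, finrank_self, finrank_fintype_fun_eq_card, Fintype.card_fin] at h1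
  have h2 : L = LinearMap.ker ((sesq (p ^ e) A v).prod (sesq (p ^ e) A w)) := by
    apply Submodule.eq_of_le_of_finrank_eq
    · intro x hx
      rw [LinearMap.mem_ker, LinearMap.prod_apply, Function.prod_apply,
        isotropic p e hp hchar he A L hL.2 v x hv hx,
        isotropic p e hp hchar he A L hL.2 w x hw hx]
      rfl
    · omega
  rw [h2, LinearMap.mem_ker, LinearMap.prod_apply, Function.prod_apply, hy v hv, hy w hw]
  rfl

/-- Normal form of a basis. -/
def IsNF (q : ℕ) (A : Matrix (Fin 4) (Fin 4) k) (b : Fin 4 → (Fin 4 → k)) : Prop :=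
  ∀ x y : Fin 4 → k, sesq q A (Fintype.linearCombination k b x) (Fintype.linearCombination k b y) =
    x 0 ^ q * y 2 + x 1 ^ q * y 3 + x 2 ^ q * y 0 + x 3 ^ q * y 1

theorem F_line [IsAlgClosed k] (p e : ℕ) (hp : p.Prime) (hchar : CharP k p) (he : 1 ≤ e)
    (A : Matrix (Fin 4) (Fin 4) k) (hA : IsUnit A) (L : Submodule k (Fin 4 → k))
    (hL : IsLineOn (extremalCone k (p ^ e) A) L) (F : (Fin 4 → k) → (Fin 4 → k))
    (hF : ∀ v y, sesq (p ^ e) A y (F v) = (sesq (p ^ e) A v y) ^ (p ^ e)) :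
    ∀ x ∈ L, F x ∈ L := by
  have hq0 : p ^ e ≠ 0 := pow_ne_zero _ hp.ne_zero
  intro x hx
  apply perp_line p e hp hchar he A hA L hL
  intro z hz
  rw [hF, isotropic p e hp hchar he A L hL.2 x z hx hz, zero_pow hq0]

theorem line_eigen [IsAlgClosed k] (p e : ℕ) (hp : p.Prime) (hchar : CharP k p) (he : 1 ≤ e)
    (A : Matrix (Fin 4) (Fin 4) k) (hA : IsUnit A) (L : Submodule k (Fin 4 → k))
    (hL : IsLineOn (extremalCone k (p ^ e) A) L) :
    ∃ v ∈ L, v ≠ 0 ∧ ∃ l : k, ∀ y, l * sesq (p ^ e) A y v = (sesq (p ^ e) A v y) ^ (p ^ e) := by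
  have hq2 : 2 ≤ p ^ e := le_trans hp.two_le (Nat.le_self_pow (by omega) p)
  obtain ⟨F, hF, hadd, hsm, hinj⟩ := exists_F_map (k := k) p e hp hchar A hA
  obtain ⟨v, hv, hv0, l, hl⟩ := exists_eigen (p ^ e * p ^ e) (by nlinarith) F hadd hsm hinj L hL.1
    (F_line p e hp hchar he A hA L hL F hF)
  refine ⟨v, hv, hv0, l, fun y => ?_⟩
  rw [← hF, hl, map_smul, smul_eq_mul]

theorem normal_form [IsAlgClosed k] (p e : ℕ) (hp : p.Prime) (hchar : CharP k p) (he : 1 ≤ e)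
    (A : Matrix (Fin 4) (Fin 4) k) (hA : IsUnit A) (L : Submodule k (Fin 4 → k))
    (hL : IsLineOn (extremalCone k (p ^ e) A) L) (v : Fin 4 → k) (hv : v ∈ L) (hv0 : v ≠ 0)
    (l : k) (hl : ∀ y, l * sesq (p ^ e) A y v = (sesq (p ^ e) A v y) ^ (p ^ e)) :
    ∃ b : Fin 4 → (Fin 4 → k), IsNF (p ^ e) A b ∧ (∃ s : k, b 0 = s • v) ∧
      L = Submodule.span k {b 0, b 1} := by
  have := Fact.mk hp
  have hq0 : p ^ e ≠ 0 := pow_ne_zero _ hp.ne_zero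
  have hq2 : 2 ≤ p ^ e := le_trans hp.two_le (Nat.le_self_pow (by omega) p)
  obtain ⟨F, hF, hadd, hsm, hinj⟩ := exists_F_map (k := k) p e hp hchar A hA
  have hFv : F v = l • v := by
    rw [← sub_eq_zero]
    apply sesq_nondeg_right (p ^ e) hq0 A hA
    intro x
    rw [map_sub, map_smul, hF, smul_eq_mul, hl, sub_self]
  obtain ⟨b0, b1, hs, hF0, hF1, hli, hspan⟩ := lang_two (p ^ e * p ^ e) (by nlinarith) F hadd hsm
    hinj L hL.1 (F_line p e hp hchar he A hA L hL F hF) v hv hv0 l hFv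
  have hb0 : b0 ∈ L := by rw [hspan]; exact Submodule.subset_span (by simp)
  have hb1 : b1 ∈ L := by rw [hspan]; exact Submodule.subset_span (by simp)
  have hsurj := sesq_surj p e hp hchar A hA b0 b1 hli
  obtain ⟨c2, hc2⟩ := hsurj (1, 0)
  obtain ⟨c3, hc3⟩ := hsurj (0, 1)
  have h02 : sesq (p ^ e) A b0 c2 = 1 := congrArg Prod.fst hc2
  have h12 : sesq (p ^ e) A b1 c2 = 0 := congrArg Prod.snd hc2
  have h03 : sesq (p ^ e) A b0 c3 = 0 := congrArg Prod.fst hc3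
  have h13 : sesq (p ^ e) A b1 c3 = 1 := congrArg Prod.snd hc3
  have h20 : sesq (p ^ e) A c2 b0 = 1 := by rw [← hF0, hF, h02, one_pow]
  have h30 : sesq (p ^ e) A c3 b0 = 0 := by rw [← hF0, hF, h03, zero_pow hq0]
  have h21 : sesq (p ^ e) A c2 b1 = 0 := by rw [← hF1, hF, h12, zero_pow hq0]
  have h31 : sesq (p ^ e) A c3 b1 = 1 := by rw [← hF1, hF, h13, one_pow]
  have iso := isotropic p e hp hchar he A L hL.2
  have h00 := iso b0 b0 hb0 hb0
  have h01 := iso b0 b1 hb0 hb1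
  have h10 := iso b1 b0 hb1 hb0
  have h11 := iso b1 b1 hb1 hb1
  obtain ⟨x, hx⟩ := ex_root_one (p ^ e) hq2 1 (sesq (p ^ e) A c2 c2)
  obtain ⟨w, hw⟩ := ex_root_one (p ^ e) hq2 1 (sesq (p ^ e) A c3 c3)
  obtain ⟨y, hy⟩ := ex_root_one (p ^ e * p ^ e) (by nlinarith) (-1)
    ((sesq (p ^ e) A c2 c3) ^ (p ^ e) - sesq (p ^ e) A c3 c2)
  obtain ⟨z, hz⟩ : ∃ z, -z = sesq (p ^ e) A c2 c3 + y ^ (p ^ e) := ⟨_, neg_neg _⟩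
  have h5 : ((-1 : k) ^ p ^ e) = -1 := by
    have h6 := add_pow_char_pow (p := p) (n := e) (1 : k) (-1)
    rw [add_neg_cancel, zero_pow hq0, one_pow] at h6
    linear_combination -h6
  have hz2 : z ^ (p ^ e) + y + sesq (p ^ e) A c3 c2 = 0 := by
    have h6 := congrArg (· ^ (p ^ e)) hz
    simp only [add_pow_char_pow, ← pow_mul] at h6
    rw [neg_eq_neg_one_mul, mul_pow, h5] at h6
    linear_combination -h6 - hy
  refine ⟨![b0, b1, c2 + x • b0 + y • b1, c3 + z • b0 + w • b1], ?_, hs, hspan⟩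
  intro X Y
  simp only [Fintype.linearCombination_apply, Fin.sum_univ_four, Matrix.cons_val]
  simp only [sesq_add_left p e hp hchar, sesq_smul_left, map_add, map_smul, smul_eq_mul,
    h00, h01, h02, h03, h10, h11, h12, h13, h20, h21, h30, h31]
  linear_combination X 2 ^ (p ^ e) * Y 2 * hx + X 3 ^ (p ^ e) * Y 3 * hw
    - X 2 ^ (p ^ e) * Y 3 * hz + X 3 ^ (p ^ e) * Y 2 * hz2

theorem NF_inj [IsAlgClosed k] (q : ℕ) (hq : q ≠ 0) (A : Matrix (Fin 4) (Fin 4) k)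
    (b : Fin 4 → (Fin 4 → k)) (hb : IsNF q A b) :
    Function.Injective (Fintype.linearCombination k b) := by
  rw [injective_iff_map_eq_zero]
  intro y hy
  have h : ∀ x : Fin 4 → k, x 0 ^ q * y 2 + x 1 ^ q * y 3 + x 2 ^ q * y 0 + x 3 ^ q * y 1 = 0 := by
    intro x
    rw [← hb x y, hy, map_zero]
  have h0 := h ![0, 0, 1, 0]
  have h1 := h ![0, 0, 0, 1]
  have h2 := h ![1, 0, 0, 0]
  have h3 := h ![0, 1, 0, 0]
  simp [zero_pow hq] at h0 h1 h2 h3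
  funext i
  fin_cases i <;> assumption

theorem NF_equiv [IsAlgClosed k] (q : ℕ) (hq : q ≠ 0) (A : Matrix (Fin 4) (Fin 4) k)
    (b b' : Fin 4 → (Fin 4 → k)) (hb : IsNF q A b) (hb' : IsNF q A b') :
    ∃ g : (Fin 4 → k) ≃ₗ[k] (Fin 4 → k), (∀ x y, sesq q A (g x) (g y) = sesq q A x y) ∧
      ∀ i, g (b i) = b' i := by
  let T := LinearEquiv.ofInjectiveEndo _ (NF_inj q hq A b hb)
  let T' := LinearEquiv.ofInjectiveEndo _ (NF_inj q hq A b' hb')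
  have hT : ∀ x, T x = Fintype.linearCombination k b x := fun x => rfl
  have hT' : ∀ x, T' x = Fintype.linearCombination k b' x := fun x => rfl
  refine ⟨T.symm.trans T', ?_, ?_⟩
  · intro x y
    obtain ⟨x, rfl⟩ := T.surjective x
    obtain ⟨y, rfl⟩ := T.surjective y
    simp only [LinearEquiv.trans_apply, LinearEquiv.symm_apply_apply]
    rw [hT, hT, hT', hT', hb, hb']
  · intro i
    have h1 : b i = T (Pi.single i 1) := by
      rw [hT]; simp
    have h2 : b' i = T' (Pi.single i 1) := by
      rw [hT']; simp
    rw [h1, h2]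
    simp

theorem preserves_of_isometry (q : ℕ) (A : Matrix (Fin 4) (Fin 4) k)
    (g : (Fin 4 → k) ≃ₗ[k] (Fin 4 → k)) (hg : ∀ x y, sesq q A (g x) (g y) = sesq q A x y) :
    PreservesCone (extremalCone k q A) g := by
  ext x
  constructor
  · rintro ⟨y, hy, rfl⟩
    change sesq q A (g y) (g y) = 0
    rw [hg]; exact hy
  · intro hx
    refine ⟨g.symm x, ?_, by simp⟩
    change sesq q A (g.symm x) (g.symm x) = 0
    rw [← hg]
    rw [LinearEquiv.apply_symm_apply]; exact hx

theorem map_span_pair (g : (Fin 4 → k) ≃ₗ[k] (Fin 4 → k)) (b b' : Fin 4 → (Fin 4 → k))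
    (h : ∀ i, g (b i) = b' i) :
    Submodule.map (g : (Fin 4 → k) →ₗ[k] (Fin 4 → k)) (Submodule.span k {b 0, b 1}) =
      Submodule.span k {b' 0, b' 1} := by
  rw [Submodule.map_span, Set.image_pair]
  simp [h]

/-- Normal form adapted to a star plane and a line in it. -/
theorem star_normal_form [IsAlgClosed k] (p e : ℕ) (hp : p.Prime) (hchar : CharP k p)
    (he : 1 ≤ e) (A : Matrix (Fin 4) (Fin 4) k) (hA : IsUnit A)
    (H L c : Submodule k (Fin 4 → k)) (S : Set (Submodule k (Fin 4 → k))) (hH : IsPlane H)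
    (hS : IsStarAt (p ^ e) (extremalCone k (p ^ e) A) S c)
    (hHS : extremalCone k (p ^ e) A ∩ (H : Set (Fin 4 → k)) = ⋃ M ∈ S, (M : Set (Fin 4 → k)))
    (hLS : L ∈ S) :
    ∃ b : Fin 4 → (Fin 4 → k), IsNF (p ^ e) A b ∧ L = Submodule.span k {b 0, b 1} ∧
      H = LinearMap.ker (sesq (p ^ e) A (b 0)) := by
  have hq0 : p ^ e ≠ 0 := pow_ne_zero _ hp.ne_zero
  obtain ⟨hc, hcard, hlines⟩ := hS
  have hc1 : finrank k c = 1 := hc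
  have hH3 : finrank k H = 3 := hH
  obtain ⟨M, hMS, hML⟩ := Set.exists_ne_of_one_lt_ncard (by omega : 1 < S.ncard) L
  have hle : ∀ N ∈ S, N ≤ H := by
    intro N hN x hx
    have : x ∈ ⋃ M ∈ S, (M : Set (Fin 4 → k)) := Set.mem_biUnion hN hx
    rw [← hHS] at this
    exact this.2
  have hL2 : finrank k L = 2 := (hlines L hLS).1.1
  have hM2 : finrank k M = 2 := (hlines M hMS).1.1
  have hsup : L ⊔ M = H := by
    apply Submodule.eq_of_le_of_finrank_le (sup_le (hle L hLS) (hle M hMS))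
    have hlt : L < L ⊔ M := by
      refine lt_of_le_of_ne le_sup_left fun h => hML ?_
      apply Submodule.eq_of_le_of_finrank_eq _ (by omega)
      rw [h]; exact le_sup_right
    have := Submodule.finrank_lt_finrank_of_lt hlt
    omega
  have hne : c ≠ ⊥ := by
    rintro rfl
    simp at hc1
  obtain ⟨v, hvc, hv0⟩ := Submodule.exists_mem_ne_zero_of_ne_bot hne
  have hvL : v ∈ L := (hlines L hLS).2 hvc
  have hvM : v ∈ M := (hlines M hMS).2 hvc
  have isoL := isotropic p e hp hchar he A L (hlines L hLS).1.2
  have isoM := isotropic p e hp hchar he A M (hlines M hMS).1.2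
  have hvH : ∀ h ∈ H, sesq (p ^ e) A v h = 0 ∧ sesq (p ^ e) A h v = 0 := by
    intro h hh
    rw [← hsup] at hh
    obtain ⟨x, hx, y, hy, rfl⟩ := Submodule.mem_sup.1 hh
    constructor
    · rw [map_add, isoL v x hvL hx, isoM v y hvM hy, add_zero]
    · rw [sesq_add_left p e hp hchar, isoL x v hx hvL, isoM y v hy hvM, add_zero]
  have kerH : ∀ u : Fin 4 → k, u ≠ 0 → (∀ h ∈ H, sesq (p ^ e) A u h = 0) →
      H = LinearMap.ker (sesq (p ^ e) A u) := by
    intro u hu hu2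
    have hne : sesq (p ^ e) A u ≠ 0 := by
      intro h
      apply hu
      apply sesq_nondeg_left (p ^ e) hq0 A hA
      intro y; rw [h]; rfl
    have h4 := Module.Dual.finrank_ker_add_one_of_ne_zero (f := sesq (p ^ e) A u) hne
    rw [finrank_fintype_fun_eq_card, Fintype.card_fin] at h4
    exact Submodule.eq_of_le_of_finrank_eq hu2 (by omega)
  have hHv := kerH v hv0 fun h hh => (hvH h hh).1
  obtain ⟨y0, hy0⟩ : ∃ y, sesq (p ^ e) A v y ≠ 0 := by
    by_contra! h
    exact hv0 (sesq_nondeg_left (p ^ e) hq0 A hA v h)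
  have hdec : ∀ y, ∃ h ∈ H, ∃ t : k, y = h + t • y0 := by
    intro y
    refine ⟨y - (sesq (p ^ e) A v y / sesq (p ^ e) A v y0) • y0, ?_,
      sesq (p ^ e) A v y / sesq (p ^ e) A v y0, by simp⟩
    rw [hHv, LinearMap.mem_ker, map_sub, map_smul, smul_eq_mul, div_mul_cancel₀ _ hy0, sub_self]
  have hy0' : sesq (p ^ e) A y0 v ≠ 0 := by
    intro h0
    apply hv0
    apply sesq_nondeg_right (p ^ e) hq0 A hA
    intro y
    obtain ⟨h, hh, t, rfl⟩ := hdec y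
    rw [sesq_add_left p e hp hchar, sesq_smul_left, h0, (hvH h hh).2]; simp
  obtain ⟨b, hb, ⟨s, hs⟩, hspan⟩ := normal_form p e hp hchar he A hA L (hlines L hLS).1 v hvL hv0
    (sesq (p ^ e) A v y0 ^ (p ^ e) / sesq (p ^ e) A y0 v) (by
      intro y
      obtain ⟨h, hh, t, rfl⟩ := hdec y
      rw [sesq_add_left p e hp hchar, sesq_smul_left, (hvH h hh).2, map_add, map_smul,
        (hvH h hh).1, zero_add, zero_add, smul_eq_mul, mul_pow]
      field_simp)
  refine ⟨b, hb, hspan, kerH (b 0) ?_ ?_⟩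
  · intro h0
    have h1 := NF_inj (p ^ e) hq0 A b hb (a₁ := Pi.single 0 1) (a₂ := 0) (by simp [h0])
    have h2 := congrFun h1 0
    simp at h2
  · intro h hh
    rw [hs, sesq_smul_left, (hvH h hh).1, mul_zero]

end Helpers

/-- `Aut(X)` acts transitively on pairs `(H, L)` of a star
plane `H` and a line `L` of the star `X ∩ H`; in particular it acts
transitively on the lines of `X`.  (An element of `Aut(X) ⊆ PGL(4,k)` is
represented by an invertible linear map `g` of `k⁴` preserving the cone.) -/
theorem aut_transitive_on_star_plane_line_pairs {k : Type*} [Field k] [IsAlgClosed k]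
    (p e q : ℕ) (hp : p.Prime) (hchar : CharP k p) (he : 1 ≤ e) (hq : q = p ^ e)
    (A : Matrix (Fin 4) (Fin 4) k) (hA : IsUnit A) :
    (∀ H L H' L' : Submodule k (Fin 4 → k),
      (∃ c S, IsStarPlaneAt q (extremalCone k q A) H c ∧
          IsStarAt q (extremalCone k q A) S c ∧
          extremalCone k q A ∩ (H : Set (Fin 4 → k)) = ⋃ M ∈ S, (M : Set (Fin 4 → k)) ∧
          L ∈ S) →
      (∃ c' S', IsStarPlaneAt q (extremalCone k q A) H' c' ∧
          IsStarAt q (extremalCone k q A) S' c' ∧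
          extremalCone k q A ∩ (H' : Set (Fin 4 → k)) = ⋃ M ∈ S', (M : Set (Fin 4 → k)) ∧
          L' ∈ S') →
      ∃ g : (Fin 4 → k) ≃ₗ[k] (Fin 4 → k),
        PreservesCone (extremalCone k q A) g ∧
          Submodule.map (g : (Fin 4 → k) →ₗ[k] (Fin 4 → k)) H = H' ∧
          Submodule.map (g : (Fin 4 → k) →ₗ[k] (Fin 4 → k)) L = L') ∧
    (∀ L L' : Submodule k (Fin 4 → k),
      IsLineOn (extremalCone k q A) L → IsLineOn (extremalCone k q A) L' →
        ∃ g : (Fin 4 → k) ≃ₗ[k] (Fin 4 → k),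
          PreservesCone (extremalCone k q A) g ∧
            Submodule.map (g : (Fin 4 → k) →ₗ[k] (Fin 4 → k)) L = L') := by
  subst hq
  have hq0 : p ^ e ≠ 0 := pow_ne_zero _ hp.ne_zero
  refine ⟨?_, ?_⟩
  · rintro H L H' L' ⟨c, S, hH, hS, hHS, hLS⟩ ⟨c', S', hH', hS', hHS', hLS'⟩
    obtain ⟨b, hb, hL, hHk⟩ := star_normal_form p e hp hchar he A hA H L c S hH.1 hS hHS hLS
    obtain ⟨b', hb', hL', hHk'⟩ :=
      star_normal_form p e hp hchar he A hA H' L' c' S' hH'.1 hS' hHS' hLS'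
    obtain ⟨g, hg, hgb⟩ := NF_equiv (p ^ e) hq0 A b b' hb hb'
    refine ⟨g, preserves_of_isometry _ A g hg, ?_, ?_⟩
    · rw [hHk, hHk']
      ext x
      rw [Submodule.mem_map]
      constructor
      · rintro ⟨y, hy, rfl⟩
        rw [LinearMap.mem_ker] at hy ⊢
        rw [← hgb 0]
        exact (hg (b 0) y).trans hy
      · intro hx
        refine ⟨g.symm x, ?_, by simp⟩
        rw [LinearMap.mem_ker] at hx ⊢
        rw [← hg, hgb 0, LinearEquiv.apply_symm_apply]
        exact hx
    · rw [hL, hL']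
      exact map_span_pair g b b' hgb
  · intro L L' hL hL'
    obtain ⟨v, hv, hv0, l, hl⟩ := line_eigen p e hp hchar he A hA L hL
    obtain ⟨v', hv', hv0', l', hl'⟩ := line_eigen p e hp hchar he A hA L' hL'
    obtain ⟨b, hb, -, hs⟩ := normal_form p e hp hchar he A hA L hL v hv hv0 l hl
    obtain ⟨b', hb', -, hs'⟩ := normal_form p e hp hchar he A hA L' hL' v' hv' hv0' l' hl'
    obtain ⟨g, hg, hgb⟩ := NF_equiv (p ^ e) hq0 A b b' hb hb'
    refine ⟨g, preserves_of_isometry _ A g hg, ?_⟩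
    rw [hs, hs']
    exact map_span_pair g b b' hgb
end

section
/- Let X be a smooth extremal surface of degree q+1 in ℙ³(k) and let ℓ be a star chord for X. Then: (1) ℓ meets X in exactly q+1 distinct points, each of which is a star point of X; (2) the stars centered at the points of ℓ ∩ X pairwise share no line; (3) there is a line ℓ', skew to ℓ, contained in every star plane centered at a point of ℓ ∩ X, and ℓ' is itself a star chord for X; (4) ℓ is contained in every star plane centered at a point of ℓ' ∩ X. -/
open Module

/-- A star chord for the surface with affine cone `X`: a line of ℙ³(k) not
contained in the surface that passes through at least two star points. -/
def IsStarChord {k : Type*} [Field k] (q : ℕ) (X : Set (Fin 4 → k))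
    (ℓ : Submodule k (Fin 4 → k)) : Prop :=
  IsLine ℓ ∧ ¬ ((ℓ : Set (Fin 4 → k)) ⊆ X) ∧
    ∃ c c' : Submodule k (Fin 4 → k), c ≠ c' ∧
      IsStarPoint q X c ∧ IsStarPoint q X c' ∧ c ≤ ℓ ∧ c' ≤ ℓ

/-- Sesquilinear pairing attached to a Frobenius form. -/
def frobB {k : Type*} [Field k] (q : ℕ) (A : Matrix (Fin 4) (Fin 4) k)
    (x : Fin 4 → k) : (Fin 4 → k) →ₗ[k] k where
  toFun y := ∑ i, ∑ j, A i j * x i ^ q * y j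
  map_add' y z := by simp only [Pi.add_apply, mul_add, Finset.sum_add_distrib]
  map_smul' c y := by
    simp only [Pi.smul_apply, smul_eq_mul, RingHom.id_apply, Finset.mul_sum]
    refine Finset.sum_congr rfl fun i _ => Finset.sum_congr rfl fun j _ => by ring

/-- The properties of the pairing that are used. -/
structure FB {k : Type*} [Field k] (q : ℕ) (B : (Fin 4 → k) → (Fin 4 → k) →ₗ[k] k) : Prop where
  add : ∀ x y, B (x + y) = B x + B y
  smul : ∀ (c : k) x, B (c • x) = c ^ q • B x
  nd : ∀ x, B x = 0 → x = 0
  two_le : 2 ≤ q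
  cast : (q : k) = 0

theorem frobB_FB {k : Type*} [Field k]
    (p e q : ℕ) (hp : p.Prime) (hchar : CharP k p) (he : 1 ≤ e) (hq : q = p ^ e)
    (A : Matrix (Fin 4) (Fin 4) k) (hA : IsUnit A) : FB q (frobB q A) := by
  have : Fact p.Prime := ⟨hp⟩
  have h2 : 2 ≤ q := by
    rw [hq]
    exact hp.two_le.trans (Nat.le_self_pow (by omega) p)
  refine ⟨?_, ?_, ?_, h2, ?_⟩
  · intro x y
    ext z
    simp only [frobB, LinearMap.add_apply, LinearMap.coe_comp, Function.comp, LinearMap.coe_mk,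
      AddHom.coe_mk, Pi.add_apply, hq, add_pow_char_pow, mul_add, add_mul, Finset.sum_add_distrib]
  · intro c x
    ext z
    simp only [frobB, LinearMap.smul_apply, LinearMap.coe_comp, Function.comp, LinearMap.coe_mk,
      AddHom.coe_mk, Pi.smul_apply, smul_eq_mul, mul_pow, Finset.mul_sum]
    refine Finset.sum_congr rfl fun i _ => Finset.sum_congr rfl fun j _ => by ring
  · intro x hx
    have h1 : Matrix.vecMul (fun i => x i ^ q) A = 0 := by
      ext j
      have := LinearMap.congr_fun hx (Pi.single j 1)
      simp only [frobB, LinearMap.coe_mk, AddHom.coe_mk, Pi.single_apply, mul_ite, mul_one,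
        mul_zero, Finset.sum_ite_eq', Finset.sum_ite_eq, Finset.mem_univ, if_true,
        LinearMap.zero_apply] at this
      simp only [Matrix.vecMul, dotProduct, Pi.zero_apply]
      rw [← this]
      exact Finset.sum_congr rfl fun i _ => mul_comm _ _
    have h3 : (fun i => x i ^ q) = 0 :=
      (Matrix.vecMul_injective_iff_isUnit.2 hA) (by simpa using h1)
    ext i
    have := congrFun h3 i
    exact pow_eq_zero_iff (by omega) |>.1 this
  · rw [hq]
    push_cast
    rw [CharP.cast_eq_zero k p, zero_pow (by omega)]

section
set_option linter.unusedSectionVars false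
variable {k : Type*} [Field k] [IsAlgClosed k] {q : ℕ}
  {B : (Fin 4 → k) → (Fin 4 → k) →ₗ[k] k}

theorem FB.zero (h : FB q B) : B 0 = 0 := by
  have := h.smul 0 0
  rw [zero_smul, zero_pow (by have := h.two_le; omega), zero_smul] at this
  exact this

/-- The kernel on the left. -/
theorem FB.left_sub (h : FB q B) (v : Fin 4 → k) (P : Submodule k (Fin 4 → k)) (w : Fin 4 → k)
    (hP : ∀ x ∈ P, B x v = 0) (hw : B w v = 0) : ∀ x ∈ P ⊔ k ∙ w, B x v = 0 := by
  intro x hx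
  obtain ⟨y, hy, z, hz, rfl⟩ := Submodule.mem_sup.1 hx
  obtain ⟨c, rfl⟩ := Submodule.mem_span_singleton.1 hz
  rw [h.add, h.smul]
  simp [hP y hy, hw]

theorem FB.left_sup (h : FB q B) (v : Fin 4 → k) (P Q : Submodule k (Fin 4 → k))
    (hP : ∀ x ∈ P, B x v = 0) (hQ : ∀ x ∈ Q, B x v = 0) : ∀ x ∈ P ⊔ Q, B x v = 0 := by
  intro x hx
  obtain ⟨y, hy, z, hz, rfl⟩ := Submodule.mem_sup.1 hx
  rw [h.add]
  simp [hP y hy, hQ z hz]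

theorem FB.expand (h : FB q B) (s : k) (u v : Fin 4 → k) :
    B (s • u + v) (s • u + v) =
      s ^ (q + 1) * B u u + s ^ q * B u v + s * B v u + B v v := by
  rw [h.add, h.smul]
  simp only [LinearMap.add_apply, LinearMap.smul_apply, map_add, map_smul, smul_eq_mul]
  ring

/-- The dehomogenised binary form. -/
noncomputable def fpoly {k : Type*} [Field k] (q : ℕ) (a b c d : k) : Polynomial k :=
  Polynomial.C a * Polynomial.X ^ (q + 1) + Polynomial.C b * Polynomial.X ^ q
    + Polynomial.C c * Polynomial.X + Polynomial.C d

theorem fpoly_eval (a b c d s : k) :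
    (fpoly q a b c d).eval s = s ^ (q + 1) * a + s ^ q * b + s * c + d := by
  simp [fpoly]; ring

/-- Vanishing of the form on a subspace implies vanishing of the pairing. -/
theorem FB.polar (h : FB q B) (L : Submodule k (Fin 4 → k)) (hL : ∀ x ∈ L, B x x = 0) :
    ∀ x ∈ L, ∀ y ∈ L, B x y = 0 := by
  intro x hx y hy
  have h2 := h.two_le
  have h0 : fpoly q 0 (B x y) (B y x) 0 = 0 := by
    apply Polynomial.funext
    intro s
    have h1 := h.expand s x y
    rw [hL _ (L.add_mem (L.smul_mem s hx) hy), hL x hx, hL y hy] at h1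
    rw [fpoly_eval, ← h1]; simp
  have := congrArg (fun f => Polynomial.coeff f q) h0
  simpa [fpoly, Polynomial.coeff_X, Polynomial.coeff_C, show 1 ≠ q by omega] using this

theorem fpoly_card [DecidableEq k] (hq : 2 ≤ q) (hc : (q : k) = 0) (a b c d : k) (ha : a ≠ 0)
    (hs : ∀ s : k, s ^ q * a + c = 0 → s ^ q * b + d = 0 → False) :
    (fpoly q a b c d).roots.toFinset.card = q + 1 ∧ fpoly q a b c d ≠ 0 := by
  have hdeg : (fpoly q a b c d).natDegree = q + 1 := by
    have h1 : (fpoly q a b c d).coeff (q + 1) = a := by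
      simp [fpoly, Polynomial.coeff_X, Polynomial.coeff_C, Polynomial.coeff_X_pow]
      omega
    apply Polynomial.natDegree_eq_of_le_of_coeff_ne_zero
    · unfold fpoly
      have : 1 ≤ q + 1 := by omega
      compute_degree
    · rw [h1]; exact ha
  have hne : fpoly q a b c d ≠ 0 := by
    intro h0; rw [h0] at hdeg; simp at hdeg
  refine ⟨?_, hne⟩
  have hnd : (fpoly q a b c d).roots.Nodup := by
    rw [Multiset.nodup_iff_count_le_one]
    intro s
    rw [Polynomial.count_roots]
    by_contra hlt
    push Not at hlt
    rw [Polynomial.one_lt_rootMultiplicity_iff_isRoot hne] at hlt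
    obtain ⟨h1, h2⟩ := hlt
    have h3 : s ^ q * a + c = 0 := by
      have : (fpoly q a b c d).derivative.eval s = s ^ q * a + c := by
        simp [fpoly, Polynomial.derivative_X_pow, hc]; ring
      rw [← this]
      first | exact h2 | exact h1
    have h4 : s ^ (q + 1) * a + s ^ q * b + s * c + d = 0 := by
      rw [← fpoly_eval]
      first | exact h1 | exact h2
    refine hs s h3 ?_
    linear_combination h4 - s * h3
  rw [Multiset.toFinset_card_of_nodup hnd, ← hdeg]
  exact ((IsAlgClosed.splits _).natDegree_eq_card_roots).symm

theorem span_point {v : Fin 4 → k} (hv : v ≠ 0) : finrank k (k ∙ v) = 1 :=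
  finrank_span_singleton hv

theorem point_eq {c : Submodule k (Fin 4 → k)} (hc : finrank k c = 1) {v : Fin 4 → k}
    (hv : v ≠ 0) (hvc : v ∈ c) : c = k ∙ v := by
  symm
  apply Submodule.eq_of_le_of_finrank_eq
  · simpa using hvc
  · rw [hc, span_point hv]

theorem exists_point {c : Submodule k (Fin 4 → k)} (hc : finrank k c = 1) :
    ∃ v, v ≠ 0 ∧ c = k ∙ v := by
  have : c ≠ ⊥ := by
    rintro rfl; simp at hc
  obtain ⟨v, hv, hv0⟩ := Submodule.exists_mem_ne_zero_of_ne_bot this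
  exact ⟨v, hv0, point_eq hc hv0 hv⟩

theorem finrank_sup_span {P : Submodule k (Fin 4 → k)} {w : Fin 4 → k} (hw : w ∉ P) :
    finrank k (P ⊔ k ∙ w : Submodule k (Fin 4 → k)) = finrank k P + 1 := by
  have h0 : w ≠ 0 := by rintro rfl; exact hw P.zero_mem
  have hd : P ⊓ k ∙ w = ⊥ := by
    rw [← disjoint_iff]
    exact Submodule.disjoint_span_singleton_of_notMem hw
  have := Submodule.finrank_sup_add_finrank_inf_eq P (k ∙ w)
  rw [hd, finrank_bot, span_point h0] at this
  simpa using this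

theorem span_sub_X (h : FB q B) (v : Fin 4 → k) :
    ((k ∙ v : Submodule k (Fin 4 → k)) : Set (Fin 4 → k)) ⊆ {x | B x x = 0} ↔ B v v = 0 := by
  constructor
  · intro hs; exact hs (Submodule.mem_span_singleton_self v)
  · intro hv x hx
    obtain ⟨c, rfl⟩ := Submodule.mem_span_singleton.1 hx
    show B (c • v) (c • v) = 0
    rw [h.smul]; simp [hv]

/-- Zeros of a nondegenerate binary Frobenius form. -/
theorem FB.binary (h : FB q B) (W : Submodule k (Fin 4 → k)) (hW : finrank k W = 2)
    (hnd : ∀ w ∈ W, (∀ x ∈ W, B w x = 0) → w = 0) :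
    {c : Submodule k (Fin 4 → k) | finrank k c = 1 ∧ c ≤ W ∧
      (c : Set (Fin 4 → k)) ⊆ {x | B x x = 0}}.ncard = q + 1 := by
  classical
  obtain ⟨u, huW, hu⟩ : ∃ u ∈ W, B u u ≠ 0 := by
    by_contra hcon
    push Not at hcon
    have hp := h.polar W hcon
    have : W = ⊥ := by
      rw [Submodule.eq_bot_iff]
      intro w hw
      exact hnd w hw (hp w hw)
    rw [this] at hW; simp at hW
  have hu0 : u ≠ 0 := by rintro rfl; simp at hu
  obtain ⟨v, hvW, hv⟩ : ∃ v ∈ W, v ∉ k ∙ u := by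
    by_contra hcon
    push Not at hcon
    have := Submodule.finrank_mono (R := k) (show W ≤ k ∙ u from hcon)
    rw [span_point hu0] at this; omega
  have hspan : (k ∙ u) ⊔ (k ∙ v) = W := by
    apply Submodule.eq_of_le_of_finrank_eq
    · apply sup_le <;> simpa
    · rw [finrank_sup_span hv, span_point hu0, hW]
  have hsv : ∀ s : k, s • u + v ≠ 0 := by
    intro s hs
    apply hv
    rw [Submodule.mem_span_singleton]
    exact ⟨-s, by rw [neg_smul]; exact (eq_neg_of_add_eq_zero_right hs).symm⟩
  have hsW : ∀ s : k, s • u + v ∈ W := fun s => W.add_mem (W.smul_mem s huW) hvW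
  obtain ⟨hcard, hne⟩ := fpoly_card h.two_le h.cast (B u u) (B u v) (B v u) (B v v) hu (by
    intro s h1 h2
    apply hsv s
    apply hnd _ (hsW s)
    intro x hx
    rw [← hspan] at hx
    obtain ⟨y, hy, z, hz, rfl⟩ := Submodule.mem_sup.1 hx
    obtain ⟨c, rfl⟩ := Submodule.mem_span_singleton.1 hy
    obtain ⟨d, rfl⟩ := Submodule.mem_span_singleton.1 hz
    rw [h.add, h.smul]
    simp only [LinearMap.add_apply, LinearMap.smul_apply, map_add, map_smul, smul_eq_mul]
    linear_combination c * h1 + d * h2)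
  rw [← hcard, ← Set.ncard_coe_finset]
  have hinj : Function.Injective (fun s : k => k ∙ (s • u + v)) := by
    intro s t hst
    have h1 : s • u + v ∈ k ∙ (t • u + v) := by
      rw [← show k ∙ (s • u + v) = k ∙ (t • u + v) from hst]
      exact Submodule.mem_span_singleton_self _
    obtain ⟨c, hc⟩ := Submodule.mem_span_singleton.1 h1
    have h2 : (c - 1) • v = (s - c * t) • u := by
      rw [sub_smul, sub_smul, one_smul, mul_smul, sub_eq_sub_iff_add_eq_add, ← hc, smul_add,
        add_comm]
    have hc1 : c = 1 := by
      by_contra hc1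
      apply hv
      rw [Submodule.mem_span_singleton]
      refine ⟨(c - 1)⁻¹ * (s - c * t), ?_⟩
      rw [mul_smul, ← h2, smul_smul, inv_mul_cancel₀ (sub_ne_zero.2 hc1), one_smul]
    subst hc1
    rw [sub_self, zero_smul, one_mul] at h2
    have := (smul_eq_zero.1 h2.symm).resolve_right hu0
    exact sub_eq_zero.1 this
  rw [← Set.ncard_image_of_injective _ hinj]
  congr 1
  ext c
  simp only [Set.mem_ofPred_eq, Set.mem_image, Finset.mem_coe, Multiset.mem_toFinset,
    Polynomial.mem_roots hne, Polynomial.IsRoot, fpoly_eval]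
  constructor
  · rintro ⟨hc1, hcW, hcX⟩
    obtain ⟨w, hw0, rfl⟩ := exists_point hc1
    have hwW : w ∈ W := hcW (Submodule.mem_span_singleton_self w)
    have hw : B w w = 0 := (span_sub_X h w).1 hcX
    rw [← hspan] at hwW
    obtain ⟨y, hy, z, hz, rfl⟩ := Submodule.mem_sup.1 hwW
    obtain ⟨c, rfl⟩ := Submodule.mem_span_singleton.1 hy
    obtain ⟨d, rfl⟩ := Submodule.mem_span_singleton.1 hz
    have hd : d ≠ 0 := by
      rintro rfl
      rw [zero_smul, add_zero] at hw hw0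
      rw [h.smul] at hw
      simp only [LinearMap.smul_apply, map_smul, smul_eq_mul] at hw
      have hc : c ≠ 0 := by rintro rfl; simp at hw0
      exact mul_ne_zero hc (mul_ne_zero (pow_ne_zero _ hc) hu) hw
    have he : c • u + d • v = d • ((d⁻¹ * c) • u + v) := by
      rw [smul_add, smul_smul, mul_inv_cancel_left₀ hd]
    refine ⟨d⁻¹ * c, ?_, ?_⟩
    · rw [← h.expand]
      rw [he, h.smul] at hw
      simp only [LinearMap.smul_apply, map_smul, smul_eq_mul] at hw
      simpa [hd] using hw
    · rw [he]
      exact (Submodule.span_singleton_smul_eq (IsUnit.mk0 d hd) _).symm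
  · rintro ⟨s, hs, rfl⟩
    refine ⟨span_point (hsv s), by simpa using hsW s, ?_⟩
    rw [span_sub_X h, h.expand]
    exact hs

theorem FB.ker_finrank (h : FB q B) {v : Fin 4 → k} (hv : v ≠ 0) :
    finrank k (LinearMap.ker (B v)) = 3 := by
  have h1 : B v ≠ 0 := fun h0 => hv (h.nd v h0)
  have h2 := LinearMap.finrank_range_add_finrank_ker (B v)
  rw [LinearMap.range_eq_top.2 (LinearMap.surjective h1)] at h2
  simp at h2
  omega

/-- Two lines of a star determine the kernel. -/
theorem FB.star_lines (h : FB q B) {v : Fin 4 → k} (hv : v ≠ 0)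
    {S : Set (Submodule k (Fin 4 → k))} (hS : IsStarAt q {x | B x x = 0} S (k ∙ v)) :
    ∃ L₁ ∈ S, ∃ L₂ ∈ S, L₁ ⊔ L₂ = LinearMap.ker (B v) ∧ B v v = 0 ∧
      (∀ x ∈ L₁, B x v = 0) ∧ (∀ x ∈ L₂, B x v = 0) := by
  obtain ⟨_, hcard, hL⟩ := hS
  have h2 := h.two_le
  obtain ⟨L₁, L₂, h1, h2, hne⟩ := Set.one_lt_ncard_iff (Set.finite_of_ncard_ne_zero (by omega)) |>.1
    (show 1 < S.ncard by omega)
  obtain ⟨⟨hd1, hX1⟩, hv1⟩ := hL L₁ h1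
  obtain ⟨⟨hd2, hX2⟩, hv2⟩ := hL L₂ h2
  unfold IsLine at hd1 hd2
  have hv1 : v ∈ L₁ := by simpa using hv1
  have hv2 : v ∈ L₂ := by simpa using hv2
  have p1 := h.polar L₁ hX1
  have p2 := h.polar L₂ hX2
  refine ⟨L₁, h1, L₂, h2, ?_, p1 v hv1 v hv1, fun x hx => p1 x hx v hv1,
    fun x hx => p2 x hx v hv2⟩
  apply Submodule.eq_of_le_of_finrank_le
  · apply sup_le
    · exact fun x hx => p1 v hv1 x hx
    · exact fun x hx => p2 v hv2 x hx
  · rw [h.ker_finrank hv]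
    by_contra hlt
    have hle1 : L₁ = L₁ ⊔ L₂ := Submodule.eq_of_le_of_finrank_le le_sup_left (by omega)
    have hle2 : L₂ = L₁ ⊔ L₂ := Submodule.eq_of_le_of_finrank_le le_sup_right (by omega)
    exact hne (hle1.trans hle2.symm)

theorem FB.star_vec (h : FB q B) {v : Fin 4 → k} (hv : v ≠ 0)
    (hS : IsStarPoint q {x | B x x = 0} (k ∙ v)) :
    B v v = 0 ∧ ∀ x, B v x = 0 → B x v = 0 := by
  obtain ⟨S, hS⟩ := hS
  obtain ⟨L₁, -, L₂, -, he, hvv, h1, h2⟩ := h.star_lines hv hS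
  refine ⟨hvv, fun x hx => ?_⟩
  have : x ∈ L₁ ⊔ L₂ := by rw [he]; exact hx
  exact h.left_sup v _ _ h1 h2 x this

theorem FB.star_plane (h : FB q B) {v : Fin 4 → k} (hv : v ≠ 0) {H : Submodule k (Fin 4 → k)}
    (hS : IsStarPlaneAt q {x | B x x = 0} H (k ∙ v)) : LinearMap.ker (B v) ≤ H := by
  obtain ⟨_, S, hS, hU⟩ := hS
  obtain ⟨L₁, m1, L₂, m2, he, -⟩ := h.star_lines hv hS
  have key : ∀ L ∈ S, L ≤ H := by
    intro L hL x hx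
    have : x ∈ ⋃ L ∈ S, (L : Set (Fin 4 → k)) := Set.mem_biUnion hL hx
    rw [← hU] at this
    exact this.2
  rw [← he]
  exact sup_le (key _ m1) (key _ m2)

theorem FB.star_of_vec (h : FB q B) {v : Fin 4 → k} (hv : v ≠ 0) (hvv : B v v = 0)
    (hs : ∀ x, B v x = 0 → B x v = 0) : IsStarPoint q {x | B x x = 0} (k ∙ v) := by
  have h3 := h.ker_finrank hv
  have h2 := h.two_le
  have hvH : k ∙ v ≤ LinearMap.ker (B v) := by simpa using hvv
  obtain ⟨W, hWH, hWc⟩ : ∃ W ≤ LinearMap.ker (B v), (W ⊔ k ∙ v = LinearMap.ker (B v) ∧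
      W ⊓ k ∙ v = ⊥) := by
    obtain ⟨W', hW'⟩ := Submodule.exists_isCompl (k ∙ v)
    refine ⟨W' ⊓ LinearMap.ker (B v), inf_le_right, ?_, ?_⟩
    · rw [sup_comm, ← sup_inf_assoc_of_le W' hvH, hW'.sup_eq_top, top_inf_eq]
    · rw [eq_bot_iff, ← hW'.inf_eq_bot]
      exact le_inf inf_le_right (inf_le_left.trans inf_le_left)
  obtain ⟨hsup, hinf⟩ := hWc
  have hW2 : finrank k W = 2 := by
    have := Submodule.finrank_sup_add_finrank_inf_eq W (k ∙ v)
    rw [hsup, hinf, h3, span_point hv, finrank_bot] at this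
    omega
  have hvW : ∀ c : k, c • v ∈ W → c • v = 0 := by
    intro c hc
    have : c • v ∈ W ⊓ k ∙ v := ⟨hc, Submodule.mem_span_singleton.2 ⟨c, rfl⟩⟩
    rw [hinf] at this
    simpa using this
  have hcard := h.binary W hW2 (by
    intro w hw hwW
    have hwv : B w v = 0 := hs w (hWH hw)
    have hker : LinearMap.ker (B v) ≤ LinearMap.ker (B w) := by
      rw [← hsup]
      apply sup_le
      · exact fun x hx => hwW x hx
      · simpa using hwv
    obtain ⟨y, hy⟩ : ∃ y, B v y = 1 :=
      LinearMap.surjective (fun h0 => hv (h.nd v h0)) 1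
    obtain ⟨ν, hν⟩ := IsAlgClosed.exists_pow_nat_eq (B w y) (show 0 < q by omega)
    have h0 : B w = B (ν • v) := by
      rw [h.smul, hν]
      refine LinearMap.ext fun x => ?_
      have hx : x - B v x • y ∈ LinearMap.ker (B v) := by
        simp [hy]
      have := hker hx
      simp only [LinearMap.mem_ker, map_sub, map_smul, smul_eq_mul] at this
      simp only [LinearMap.smul_apply, smul_eq_mul]
      linear_combination this
    have h1 : w + (-1 : k) • (ν • v) = 0 := by
      have h5 : B ((ν • v) + (-1 : k) • (ν • v)) = 0 := by
        rw [neg_one_smul, add_neg_cancel, h.zero]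
      apply h.nd
      rw [h.add] at h5 ⊢
      rw [h0, h5]
    have h6 : w = ν • v := by
      rw [neg_one_smul, ← sub_eq_add_neg] at h1
      exact sub_eq_zero.1 h1
    rw [h6] at hw ⊢
    exact hvW ν hw)
  refine ⟨(fun c => c ⊔ k ∙ v) '' {c : Submodule k (Fin 4 → k) | finrank k c = 1 ∧ c ≤ W ∧
      (c : Set (Fin 4 → k)) ⊆ {x | B x x = 0}}, span_point hv, ?_, ?_⟩
  · rw [Set.InjOn.ncard_image, hcard]
    rintro c ⟨hc1, hcW, -⟩ d ⟨hd1, hdW, -⟩ hcd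
    have key : ∀ c ≤ W, (c ⊔ k ∙ v) ⊓ W = c := by
      intro c hc
      rw [sup_inf_assoc_of_le _ hc, inf_comm, hinf, sup_bot_eq]
    rw [← key c hcW, ← key d hdW]
    exact congrArg (· ⊓ W) hcd
  · rintro _ ⟨c, ⟨hc1, hcW, hcX⟩, rfl⟩
    obtain ⟨w, hw0, rfl⟩ := exists_point hc1
    have hwW : w ∈ W := hcW (Submodule.mem_span_singleton_self w)
    have hw : B w w = 0 := (span_sub_X h w).1 hcX
    refine ⟨⟨?_, ?_⟩, le_sup_right⟩
    · unfold IsLine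
      rw [finrank_sup_span, hc1]
      intro hvw
      have : v ∈ W := hcW hvw
      have := hvW 1 (by simpa using this)
      exact hv (by simpa using this)
    · intro x hx
      have hvw : B v w = 0 := hWH hwW
      have hwv : B w v = 0 := hs w hvw
      obtain ⟨y, hy, z, hz, rfl⟩ := Submodule.mem_sup.1 hx
      obtain ⟨c, rfl⟩ := Submodule.mem_span_singleton.1 hy
      obtain ⟨d, rfl⟩ := Submodule.mem_span_singleton.1 hz
      show B (c • w + d • v) (c • w + d • v) = 0
      rw [h.add, h.smul, h.smul]
      simp [hw, hvv, hvw, hwv]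

/-- Orthogonal decomposition into two lines. -/
theorem FB.ortho (h : FB q B) (P Q : Submodule k (Fin 4 → k)) (hP : finrank k P = 2)
    (hQ : finrank k Q = 2) (hsup : P ⊔ Q = ⊤) (hinf : P ⊓ Q = ⊥)
    (hPQ : ∀ x ∈ P, ∀ y ∈ Q, B x y = 0) (hQP : ∀ x ∈ Q, ∀ y ∈ P, B x y = 0) :
    {c : Submodule k (Fin 4 → k) | IsPoint c ∧ c ≤ P ∧
      (c : Set (Fin 4 → k)) ⊆ {x | B x x = 0}}.ncard = q + 1 ∧
    (∀ c : Submodule k (Fin 4 → k), IsPoint c → c ≤ P →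
      (c : Set (Fin 4 → k)) ⊆ {x | B x x = 0} → IsStarPoint q {x | B x x = 0} c) ∧
    (∀ c H : Submodule k (Fin 4 → k), IsPoint c → c ≤ P →
      (c : Set (Fin 4 → k)) ⊆ {x | B x x = 0} → IsStarPlaneAt q {x | B x x = 0} H c → Q ≤ H) ∧
    IsStarChord q {x | B x x = 0} P := by
  have hnd : ∀ w ∈ P, (∀ x ∈ P, B w x = 0) → w = 0 := by
    intro w hw hwP
    apply h.nd
    rw [← LinearMap.ker_eq_top, eq_top_iff, ← hsup]
    exact sup_le (fun x hx => hwP x hx) (fun x hx => hPQ w hw x hx)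
  have hcard := h.binary P hP hnd
  have hstar : ∀ c : Submodule k (Fin 4 → k), IsPoint c → c ≤ P →
      (c : Set (Fin 4 → k)) ⊆ {x | B x x = 0} → IsStarPoint q {x | B x x = 0} c := by
    intro c hc hcP hcX
    obtain ⟨w, hw0, rfl⟩ := exists_point hc
    have hwP : w ∈ P := hcP (Submodule.mem_span_singleton_self w)
    have hw : B w w = 0 := (span_sub_X h w).1 hcX
    have hwQ : w ∉ Q := by
      intro hwQ
      have : w ∈ P ⊓ Q := ⟨hwP, hwQ⟩
      rw [hinf] at this
      exact hw0 (by simpa using this)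
    have he : Q ⊔ k ∙ w = LinearMap.ker (B w) := by
      apply Submodule.eq_of_le_of_finrank_eq
      · apply sup_le
        · exact fun x hx => hPQ w hwP x hx
        · simpa using hw
      · rw [finrank_sup_span hwQ, hQ, h.ker_finrank hw0]
    refine h.star_of_vec hw0 hw fun x hx => ?_
    have hx' : x ∈ Q ⊔ k ∙ w := by rw [he]; exact hx
    exact h.left_sub w Q w (fun x hx => hQP x hx w hwP) hw x hx'
  refine ⟨hcard, hstar, ?_, hP, ?_, ?_⟩
  · intro c H hc hcP hcX hH
    obtain ⟨w, hw0, rfl⟩ := exists_point hc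
    have hwP : w ∈ P := hcP (Submodule.mem_span_singleton_self w)
    exact le_trans (fun x hx => hPQ w hwP x hx) (h.star_plane hw0 hH)
  · intro hPX
    have hp := h.polar P hPX
    have : P = ⊥ := by
      rw [Submodule.eq_bot_iff]
      intro w hw
      exact hnd w hw (hp w hw)
    rw [this] at hP; simp at hP
  · have h2 := h.two_le
    obtain ⟨c, d, hc, hd, hne⟩ :=
      Set.one_lt_ncard_iff (Set.finite_of_ncard_ne_zero (by rw [hcard]; omega)) |>.1
        (lt_of_lt_of_eq (show 1 < q + 1 by omega) hcard.symm)
    exact ⟨c, d, hne, hstar c hc.1 hc.2.1 hc.2.2, hstar d hd.1 hd.2.1 hd.2.2, hc.2.1, hd.2.1⟩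

/-- The orthogonal complement of a star chord. -/
theorem FB.chord (h : FB q B) (P : Submodule k (Fin 4 → k))
    (hP : IsStarChord q {x | B x x = 0} P) :
    ∃ Q : Submodule k (Fin 4 → k), finrank k Q = 2 ∧ P ⊔ Q = ⊤ ∧ P ⊓ Q = ⊥ ∧
      (∀ x ∈ P, ∀ y ∈ Q, B x y = 0) ∧ (∀ x ∈ Q, ∀ y ∈ P, B x y = 0) := by
  obtain ⟨hP2, hPX, c, d, hcd, hc, hd, hcP, hdP⟩ := hP
  unfold IsLine at hP2
  obtain ⟨u, hu0, rfl⟩ := exists_point hc.choose_spec.1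
  obtain ⟨v, hv0, rfl⟩ := exists_point hd.choose_spec.1
  obtain ⟨huu, hu⟩ := h.star_vec hu0 hc
  obtain ⟨hvv, hv⟩ := h.star_vec hv0 hd
  have hvu' : v ∉ k ∙ u := fun hm => hcd (point_eq (span_point hu0) hv0 hm)
  have hspan : (k ∙ u) ⊔ (k ∙ v) = P := by
    apply Submodule.eq_of_le_of_finrank_eq (sup_le hcP hdP)
    rw [finrank_sup_span hvu', span_point hu0, hP2]
  have hex : ∀ x ∈ P, ∃ s t : k, x = s • u + t • v := by
    intro x hx
    rw [← hspan] at hx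
    obtain ⟨y, hy, z, hz, rfl⟩ := Submodule.mem_sup.1 hx
    obtain ⟨c, rfl⟩ := Submodule.mem_span_singleton.1 hy
    obtain ⟨d, rfl⟩ := Submodule.mem_span_singleton.1 hz
    exact ⟨c, d, rfl⟩
  have huv : B u v ≠ 0 := by
    intro h0
    have h1 := hu v h0
    apply hPX
    intro x hx
    obtain ⟨s, t, rfl⟩ := hex x hx
    show B (s • u + t • v) (s • u + t • v) = 0
    rw [h.add, h.smul, h.smul]
    simp [huu, hvv, h0, h1]
  have hvu : B v u ≠ 0 := fun h0 => huv (hv u h0)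
  have hinf : P ⊓ (LinearMap.ker (B u) ⊓ LinearMap.ker (B v)) = ⊥ := by
    rw [Submodule.eq_bot_iff]
    rintro x ⟨hx, hxu, hxv⟩
    obtain ⟨s, t, rfl⟩ := hex x hx
    have h1 : t = 0 := by simpa [huu, huv] using hxu
    have h2 : s = 0 := by simpa [hvv, hvu] using hxv
    simp [h1, h2]
  have hQ : finrank k (LinearMap.ker (B u) ⊓ LinearMap.ker (B v) : Submodule k (Fin 4 → k)) = 2 := by
    have h1 := Submodule.finrank_sup_add_finrank_inf_eq (LinearMap.ker (B u)) (LinearMap.ker (B v))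
    have h2 := Submodule.finrank_sup_add_finrank_inf_eq P
      (LinearMap.ker (B u) ⊓ LinearMap.ker (B v))
    have h3 := Submodule.finrank_le (P ⊔ (LinearMap.ker (B u) ⊓ LinearMap.ker (B v)))
    have h4 := Submodule.finrank_le (LinearMap.ker (B u) ⊔ LinearMap.ker (B v))
    rw [hinf, finrank_bot] at h2
    rw [h.ker_finrank hu0, h.ker_finrank hv0] at h1
    simp only [finrank_fin_fun] at h3 h4
    omega
  refine ⟨LinearMap.ker (B u) ⊓ LinearMap.ker (B v), hQ, ?_, hinf, ?_, ?_⟩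
  · apply Submodule.eq_top_of_finrank_eq
    have h2 := Submodule.finrank_sup_add_finrank_inf_eq P
      (LinearMap.ker (B u) ⊓ LinearMap.ker (B v))
    rw [hinf, finrank_bot, hQ, hP2] at h2
    simpa using h2
  · rintro x hx y ⟨hyu, hyv⟩
    obtain ⟨s, t, rfl⟩ := hex x hx
    have hyu : B u y = 0 := hyu
    have hyv : B v y = 0 := hyv
    rw [h.add, h.smul, h.smul]
    simp [hyu, hyv]
  · rintro x ⟨hxu, hxv⟩ y hy
    obtain ⟨s, t, rfl⟩ := hex y hy
    simp [hu x hxu, hv x hxv]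

end

/-- Let `ℓ` be a star chord for a smooth extremal surface
`X` of degree `q+1` in ℙ³(k).  Then:
(1) `ℓ` meets `X` in exactly `q+1` distinct points, each a star point of `X`;
(2) the stars centered at the points of `ℓ ∩ X` pairwise share no line;
(3) there is a line `ℓ'`, skew to `ℓ`, contained in every star plane centered
at a point of `ℓ ∩ X`, and `ℓ'` is itself a star chord for `X`;
(4) `ℓ` is contained in every star plane centered at a point of `ℓ' ∩ X`. -/
theorem star_chord_properties {k : Type*} [Field k] [IsAlgClosed k]
    (p e q : ℕ) (hp : p.Prime) (hchar : CharP k p) (he : 1 ≤ e) (hq : q = p ^ e)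
    (A : Matrix (Fin 4) (Fin 4) k) (hA : IsUnit A)
    (ℓ : Submodule k (Fin 4 → k)) (hℓ : IsStarChord q (extremalCone k q A) ℓ) :
    -- (1)
    ({c : Submodule k (Fin 4 → k) |
        IsPoint c ∧ c ≤ ℓ ∧ (c : Set (Fin 4 → k)) ⊆ extremalCone k q A}.ncard = q + 1 ∧
      ∀ c : Submodule k (Fin 4 → k),
        IsPoint c → c ≤ ℓ → (c : Set (Fin 4 → k)) ⊆ extremalCone k q A →
          IsStarPoint q (extremalCone k q A) c) ∧
    -- (2)
    (∀ c c' : Submodule k (Fin 4 → k),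
      IsPoint c → c ≤ ℓ → (c : Set (Fin 4 → k)) ⊆ extremalCone k q A →
      IsPoint c' → c' ≤ ℓ → (c' : Set (Fin 4 → k)) ⊆ extremalCone k q A →
      c ≠ c' →
      ∀ S S' : Set (Submodule k (Fin 4 → k)),
        IsStarAt q (extremalCone k q A) S c → IsStarAt q (extremalCone k q A) S' c' →
          S ∩ S' = ∅) ∧
    -- (3) and (4)
    (∃ ℓ' : Submodule k (Fin 4 → k), IsLine ℓ' ∧ SkewLine ℓ ℓ' ∧
      IsStarChord q (extremalCone k q A) ℓ' ∧
      (∀ c H : Submodule k (Fin 4 → k),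
        IsPoint c → c ≤ ℓ → (c : Set (Fin 4 → k)) ⊆ extremalCone k q A →
          IsStarPlaneAt q (extremalCone k q A) H c → ℓ' ≤ H) ∧
      (∀ c H : Submodule k (Fin 4 → k),
        IsPoint c → c ≤ ℓ' → (c : Set (Fin 4 → k)) ⊆ extremalCone k q A →
          IsStarPlaneAt q (extremalCone k q A) H c → ℓ ≤ H)) := by
  have h := frobB_FB p e q hp hchar he hq A hA
  obtain ⟨ℓ', hQ, hsup, hinf, h1, h2⟩ := h.chord ℓ hℓ
  have hP : finrank k ℓ = 2 := hℓ.1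
  obtain ⟨a1, a2, a3, -⟩ := h.ortho ℓ ℓ' hP hQ hsup hinf h1 h2
  obtain ⟨-, -, b3, b4⟩ := h.ortho ℓ' ℓ hQ hP (by rw [sup_comm, hsup]) (by rw [inf_comm, hinf]) h2 h1
  refine ⟨⟨a1, a2⟩, ?_, ℓ', hQ, hinf, b4, a3, b3⟩
  intro c c' hc hcl hcX hc' hcl' hcX' hne S S' hS hS'
  rw [Set.eq_empty_iff_forall_notMem]
  rintro L ⟨hL, hL'⟩
  obtain ⟨⟨hL2, hLX⟩, hcL⟩ := hS.2.2 L hL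
  obtain ⟨-, hcL'⟩ := hS'.2.2 L hL'
  apply hℓ.2.1
  unfold IsPoint at hc hc'
  unfold IsLine at hL2
  obtain ⟨u, hu0, rfl⟩ := exists_point hc
  obtain ⟨v, hv0, rfl⟩ := exists_point hc'
  have hvu' : v ∉ k ∙ u := fun hm => hne (point_eq (span_point hu0) hv0 hm)
  have hd := finrank_sup_span hvu'
  rw [hc] at hd
  have e1 : (k ∙ u) ⊔ (k ∙ v) = ℓ :=
    Submodule.eq_of_le_of_finrank_eq (sup_le hcl hcl') (by omega)
  have e2 : (k ∙ u) ⊔ (k ∙ v) = L :=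
    Submodule.eq_of_le_of_finrank_eq (sup_le hcL hcL') (by omega)
  rw [← e1, e2]
  exact hLX
end

section
/- Let X be a smooth extremal surface of degree q+1 in ℙ³(k). Then Aut(X) acts transitively on the set of ordered pairs of skew lines on X: for any skew lines L, L' on X and any skew lines M, M' on X, there exists g ∈ Aut(X) with g(L) = M and g(L') = M'. -/
open Module

lemma lang_fixed {k V : Type*} [Field k] [IsAlgClosed k] [AddCommGroup V] [Module k V]
    (hV : finrank k V = 2) (N : ℕ) (hN : 2 ≤ N) (φ : V → V)
    (hadd : ∀ x y, φ (x + y) = φ x + φ y) (hsm : ∀ (c : k) x, φ (c • x) = c ^ N • φ x)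
    (hinj : ∀ x, φ x = 0 → x = 0) : ∃ w, w ≠ 0 ∧ φ w = w := by
  have : Nontrivial V := Module.nontrivial_of_finrank_pos (R := k) (by omega)
  obtain ⟨v, hv⟩ := exists_ne (0 : V)
  by_cases h : ∃ c : k, φ v = c • v
  · obtain ⟨c, hc⟩ := h
    have hc0 : c ≠ 0 := by
      rintro rfl
      exact hv (hinj v (by simpa using hc))
    obtain ⟨l, hl⟩ := IsAlgClosed.exists_pow_nat_eq (c⁻¹) (n := N - 1) (by omega)
    have hl0 : l ≠ 0 := by
      rintro rfl
      rw [zero_pow (by omega)] at hl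
      exact inv_ne_zero hc0 hl.symm
    refine ⟨l • v, smul_ne_zero hl0 hv, ?_⟩
    rw [hsm, hc, smul_smul]
    congr 1
    have : l ^ N = l ^ (N - 1) * l := by rw [← pow_succ]; congr 1; omega
    rw [this, hl]; field_simp
  · push Not at h
    have hli : LinearIndependent k ![v, φ v] := by
      rw [LinearIndependent.pair_iff' hv]
      exact fun a ha => h a ha.symm
    have hsp := hli.span_eq_top_of_card_eq_finrank (by simp [hV])
    have hmem : φ (φ v) ∈ Submodule.span k (Set.range ![v, φ v]) := by rw [hsp]; trivial
    rw [Matrix.range_cons, Matrix.range_cons, Matrix.range_empty, Set.union_empty,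
      Set.singleton_union, Submodule.mem_span_pair] at hmem
    obtain ⟨a, b, hab⟩ := hmem
    have ha : a ≠ 0 := by
      rintro rfl
      obtain ⟨b', hb'⟩ := IsAlgClosed.exists_pow_nat_eq b (n := N) (by omega)
      have h0 : φ ((-b') • v + φ v) = 0 := by
        have h1 : φ ((-b') • v) + φ (b' • v) = 0 := by
          rw [← hadd, ← add_smul]
          simpa using hsm 0 v |>.trans (by rw [zero_pow (by omega), zero_smul])
        rw [hadd, ← hab, zero_smul, zero_add, ← hb', ← hsm]; exact h1
      have := hinj _ h0
      apply h b'
      rw [neg_smul, neg_add_eq_zero] at this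
      exact this.symm
    let P : Polynomial k := Polynomial.C (a ^ N) * Polynomial.X ^ (N * N - 1)
      + (Polynomial.C b * Polynomial.X ^ (N - 1) - 1)
    have hNN : N - 1 < N * N - 1 := by
      have : N * 2 ≤ N * N := Nat.mul_le_mul_left _ hN
      omega
    have hdeg : P.degree ≠ 0 := by
      have h1 : (Polynomial.C (a ^ N) * Polynomial.X ^ (N * N - 1)).degree = ((N * N - 1 : ℕ) : WithBot ℕ) :=
        Polynomial.degree_C_mul_X_pow _ (pow_ne_zero _ ha)
      have h2 : (Polynomial.C b * Polynomial.X ^ (N - 1) - 1).degree < ((N * N - 1 : ℕ) : WithBot ℕ) := by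
        refine (Polynomial.degree_sub_le _ _).trans_lt (max_lt ?_ ?_)
        · exact (Polynomial.degree_C_mul_X_pow_le _ _).trans_lt (by exact_mod_cast hNN)
        · rw [Polynomial.degree_one]; exact_mod_cast (by omega)
      rw [Polynomial.degree_add_eq_left_of_degree_lt (by rw [h1]; exact h2), h1]
      exact_mod_cast (by omega)
    obtain ⟨y, hy⟩ := IsAlgClosed.exists_root P hdeg
    simp only [P, Polynomial.IsRoot, Polynomial.eval_add, Polynomial.eval_sub, Polynomial.eval_mul,
      Polynomial.eval_C, Polynomial.eval_pow, Polynomial.eval_X, Polynomial.eval_one] at hy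
    have hy0 : y ≠ 0 := by
      rintro rfl
      rw [zero_pow (by omega), zero_pow (by omega)] at hy
      simp at hy
    have hy2 : (a * y ^ N) ^ N + y ^ N * b = y := by
      have e1 : y ^ (N * N) = y ^ (N * N - 1) * y := by rw [← pow_succ]; congr 1; omega
      have e2 : y ^ N = y ^ (N - 1) * y := by rw [← pow_succ]; congr 1; omega
      rw [mul_pow, ← pow_mul, e1, e2]
      linear_combination y * hy
    refine ⟨(a * y ^ N) • v + y • φ v, ?_, ?_⟩
    · intro h0
      have := (LinearIndependent.pair_iff.1 hli) _ _ h0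
      exact hy0 this.2
    · rw [hadd, hsm, hsm, ← hab, smul_add, smul_smul, smul_smul, add_comm (_ • φ v), add_assoc,
        ← add_smul, add_comm (y ^ N * b), hy2, mul_comm a]

lemma lang_basis {k V : Type*} [Field k] [IsAlgClosed k] [AddCommGroup V] [Module k V]
    (hV : finrank k V = 2) (N : ℕ) (hN : 2 ≤ N) (φ : V → V)
    (hadd : ∀ x y, φ (x + y) = φ x + φ y) (hsm : ∀ (c : k) x, φ (c • x) = c ^ N • φ x)
    (hinj : ∀ x, φ x = 0 → x = 0) :
    ∃ w : Fin 2 → V, LinearIndependent k w ∧ ∀ i, φ (w i) = w i := by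
  obtain ⟨w, hw, hf⟩ := lang_fixed hV N hN φ hadd hsm hinj
  obtain ⟨v, hv⟩ : ∃ v, ∀ c : k, c • w ≠ v := by
    by_contra! h
    have := finrank_le_one w h
    omega
  have hli : LinearIndependent k ![w, v] := by
    rw [LinearIndependent.pair_iff' hw]
    exact hv
  have hsp := hli.span_eq_top_of_card_eq_finrank (by simp [hV])
  have hmem : φ v ∈ Submodule.span k (Set.range ![w, v]) := by rw [hsp]; trivial
  rw [Matrix.range_cons, Matrix.range_cons, Matrix.range_empty, Set.union_empty,
      Set.singleton_union, Submodule.mem_span_pair] at hmem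
  obtain ⟨c, d, hcd⟩ := hmem
  have hd : d ≠ 0 := by
    rintro rfl
    obtain ⟨b', hb'⟩ := IsAlgClosed.exists_pow_nat_eq c (n := N) (by omega)
    have h0 : φ ((-b') • w + v) = 0 := by
      have h1 : φ ((-b') • w) + φ (b' • w) = 0 := by
        rw [← hadd, ← add_smul]
        simpa using hsm 0 w |>.trans (by rw [zero_pow (by omega), zero_smul])
      rw [hadd, ← hcd, zero_smul, add_zero, ← hb']
      nth_rewrite 2 [← hf]
      rw [← hsm]; exact h1
    have := hinj _ h0
    apply hv b'
    rw [neg_smul, neg_add_eq_zero] at this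
    exact this
  obtain ⟨l, hl⟩ := IsAlgClosed.exists_pow_nat_eq (d⁻¹) (n := N - 1) (by omega)
  have hl0 : l ≠ 0 := by
    rintro rfl
    rw [zero_pow (by omega)] at hl
    exact inv_ne_zero hd hl.symm
  have hlN : l ^ N * d = l := by
    have : l ^ N = l ^ (N - 1) * l := by rw [← pow_succ]; congr 1; omega
    rw [this, hl]; field_simp
  let P : Polynomial k := Polynomial.X ^ N + (Polynomial.C (l ^ N * c) - Polynomial.X)
  have hdeg : P.degree ≠ 0 := by
    have h2 : (Polynomial.C (l ^ N * c) - Polynomial.X).degree < ((N : ℕ) : WithBot ℕ) := by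
      refine (Polynomial.degree_sub_le _ _).trans_lt (max_lt ?_ ?_)
      · exact Polynomial.degree_C_le.trans_lt (by exact_mod_cast (by omega))
      · rw [Polynomial.degree_X]; exact_mod_cast (by omega)
    rw [Polynomial.degree_add_eq_left_of_degree_lt (by rw [Polynomial.degree_X_pow]; exact h2),
      Polynomial.degree_X_pow]
    exact_mod_cast (by omega)
  obtain ⟨t, ht⟩ := IsAlgClosed.exists_root P hdeg
  simp only [P, Polynomial.IsRoot, Polynomial.eval_add, Polynomial.eval_sub,
      Polynomial.eval_C, Polynomial.eval_pow, Polynomial.eval_X] at ht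
  refine ⟨![w, t • w + l • v], ?_, ?_⟩
  · rw [LinearIndependent.pair_iff] at hli ⊢
    intro s r h
    have h' : (s + r * t) • w + (r * l) • v = 0 := by
      rw [← h]; module
    obtain ⟨h1, h2⟩ := hli _ _ h'
    have : r = 0 := by simpa [hl0] using h2
    subst this
    simpa using h1
  · intro i
    fin_cases i
    · simpa using hf
    · simp only [Fin.mk_one, Matrix.cons_val_one, Matrix.cons_val_fin_one]
      rw [hadd, hsm, hsm, hf, ← hcd, smul_add, smul_smul, smul_smul, hlN, ← add_assoc, ← add_smul]
      congr 2
      linear_combination ht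

lemma lang_matrix {k : Type*} [Field k] [IsAlgClosed k] (N : ℕ) (hN : 2 ≤ N) (F : k →+* k)
    (hF : ∀ x, F x = x ^ N) (R : Matrix (Fin 2) (Fin 2) k) (hR : IsUnit R.det) :
    ∃ G : Matrix (Fin 2) (Fin 2) k, IsUnit G.det ∧ G.map F = R * G := by
  obtain ⟨w, hw, hf⟩ := lang_basis (k := k) (V := Fin 2 → k) (by simp) N hN
    (fun v => R⁻¹.mulVec (F ∘ v)) (by
      intro x y
      rw [← Matrix.mulVec_add]; congr 1; ext i; simp) (by
      intro c x
      rw [← Matrix.mulVec_smul]; congr 1; ext i; simp [hF, mul_pow]) (by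
      intro x hx
      have := congrArg R.mulVec hx
      rw [Matrix.mulVec_mulVec, Matrix.mul_nonsing_inv _ hR, Matrix.one_mulVec,
        Matrix.mulVec_zero] at this
      ext i
      have := congrFun this i
      simpa using this)
  refine ⟨(Matrix.of w).transpose, ?_, ?_⟩
  · rw [Matrix.det_transpose, ← Matrix.isUnit_iff_isUnit_det]
    exact Matrix.linearIndependent_rows_iff_isUnit.1 hw
  · ext i j
    have := congrArg R.mulVec (hf j)
    beta_reduce at this
    rw [Matrix.mulVec_mulVec, Matrix.mul_nonsing_inv _ hR, Matrix.one_mulVec] at this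
    have := congrFun this i
    simpa [Matrix.mul_apply, Matrix.mulVec, dotProduct] using this

/-- The sesquilinear-type form attached to `A` and a ring endomorphism `F`. -/
def frobBil {k : Type*} [Field k] (F : k →+* k) (A : Matrix (Fin 4) (Fin 4) k)
    (x y : Fin 4 → k) : k :=
  (F ∘ x) ⬝ᵥ (A.mulVec y)

section bil
variable {k : Type*} [Field k] (F : k →+* k) (A : Matrix (Fin 4) (Fin 4) k)

lemma frobBil_add_left (x x' y) : frobBil F A (x + x') y = frobBil F A x y + frobBil F A x' y := by
  unfold frobBil
  rw [← add_dotProduct]; congr 1; ext i; simp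

lemma frobBil_smul_left (c : k) (x y) : frobBil F A (c • x) y = F c * frobBil F A x y := by
  unfold frobBil
  rw [← smul_eq_mul, ← smul_dotProduct]; congr 1; ext i; simp

lemma frobBil_add_right (x y y') : frobBil F A x (y + y') = frobBil F A x y + frobBil F A x y' := by
  unfold frobBil
  rw [Matrix.mulVec_add, dotProduct_add]

lemma frobBil_smul_right (c : k) (x y) : frobBil F A x (c • y) = c * frobBil F A x y := by
  unfold frobBil
  rw [Matrix.mulVec_smul, dotProduct_smul, smul_eq_mul]

lemma frobBil_sum_right {ι : Type*} (s : Finset ι) (x : Fin 4 → k) (c : ι → k)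
    (y : ι → Fin 4 → k) :
    frobBil F A x (∑ i ∈ s, c i • y i) = ∑ i ∈ s, c i * frobBil F A x (y i) := by
  unfold frobBil
  rw [Matrix.mulVec_sum, dotProduct_sum]
  simp [Matrix.mulVec_smul, dotProduct_smul]

lemma frobBil_sum_left {ι : Type*} (s : Finset ι) (y : Fin 4 → k) (c : ι → k)
    (x : ι → Fin 4 → k) :
    frobBil F A (∑ i ∈ s, c i • x i) y = ∑ i ∈ s, F (c i) * frobBil F A (x i) y := by
  classical
  induction s using Finset.induction_on with
  | empty => simp [frobBil, dotProduct]
  | insert a s ha ih =>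
    rw [Finset.sum_insert ha, Finset.sum_insert ha, frobBil_add_left, frobBil_smul_left, ih]

lemma frobForm_eq_frobBil (q : ℕ) (hF : ∀ x, F x = x ^ q) (x) :
    frobForm q A x = frobBil F A x x := by
  simp only [frobForm, frobBil, dotProduct, Matrix.mulVec, Finset.mul_sum, Function.comp, hF]
  refine Finset.sum_congr rfl fun i _ => Finset.sum_congr rfl fun j _ => by ring

lemma frobBil_nondeg (hA : IsUnit A) (y) (h : ∀ x, frobBil F A x y = 0) : y = 0 := by
  have h1 : A.mulVec y = 0 := by
    ext i
    have := h (Pi.single i 1)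
    have h2 : F ∘ (Pi.single i 1 : Fin 4 → k) = Pi.single i 1 := by
      ext j; by_cases hj : j = i
      · subst hj; simp
      · simp [hj]
    rw [frobBil, h2, single_one_dotProduct] at this
    simpa using this
  rw [Matrix.isUnit_iff_isUnit_det] at hA
  have := congrArg A⁻¹.mulVec h1
  rwa [Matrix.mulVec_mulVec, Matrix.nonsing_inv_mul _ hA, Matrix.one_mulVec,
    Matrix.mulVec_zero] at this

lemma frobBil_isotropic [IsAlgClosed k] (q : ℕ) (hq : 2 ≤ q) (hF : ∀ x, F x = x ^ q)
    (L : Submodule k (Fin 4 → k)) (hL : (L : Set (Fin 4 → k)) ⊆ extremalCone k q A)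
    (x y) (hx : x ∈ L) (hy : y ∈ L) : frobBil F A x y = 0 := by
  have h0 : ∀ z ∈ L, frobBil F A z z = 0 := fun z hz => by
    rw [← frobForm_eq_frobBil F A q hF]; exact hL hz
  have h1 : ∀ x ∈ L, ∀ y ∈ L, frobBil F A x y + frobBil F A y x = 0 := fun x hx y hy => by
    have := h0 _ (L.add_mem hx hy)
    rw [frobBil_add_left, frobBil_add_right, frobBil_add_right, h0 x hx, h0 y hy] at this
    simpa using this
  let P : Polynomial k := Polynomial.X ^ q + (Polynomial.C (-1) - Polynomial.X)
  have hdeg : P.degree ≠ 0 := by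
    have h2 : (Polynomial.C (-1 : k) - Polynomial.X).degree < ((q : ℕ) : WithBot ℕ) := by
      refine (Polynomial.degree_sub_le _ _).trans_lt (max_lt ?_ ?_)
      · exact Polynomial.degree_C_le.trans_lt (by exact_mod_cast (by omega))
      · rw [Polynomial.degree_X]; exact_mod_cast (by omega)
    rw [Polynomial.degree_add_eq_left_of_degree_lt (by rw [Polynomial.degree_X_pow]; exact h2),
      Polynomial.degree_X_pow]
    exact_mod_cast (by omega)
  obtain ⟨t, ht⟩ := IsAlgClosed.exists_root P hdeg
  simp only [P, Polynomial.IsRoot, Polynomial.eval_add, Polynomial.eval_sub,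
      Polynomial.eval_C, Polynomial.eval_pow, Polynomial.eval_X] at ht
  have e1 := h1 x hx y hy
  have e2 := h1 _ (L.smul_mem t hx) y hy
  rw [frobBil_smul_left, frobBil_smul_right, hF] at e2
  linear_combination e2 - t * e1 - frobBil F A x y * ht

/-- A normal form of the pairing for a pair of skew lines on the surface. -/
lemma exists_adapted [IsAlgClosed k] (q : ℕ) (hq : 2 ≤ q) (hF : ∀ x, F x = x ^ q) (hA : IsUnit A)
    (L L' : Submodule k (Fin 4 → k)) (hL : IsLineOn (extremalCone k q A) L)
    (hL' : IsLineOn (extremalCone k q A) L') (hs : SkewLine L L') :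
    ∃ b : Basis (Fin 2 ⊕ Fin 2) k (Fin 4 → k),
      Submodule.span k (Set.range (b ∘ Sum.inl)) = L ∧
      Submodule.span k (Set.range (b ∘ Sum.inr)) = L' ∧
      ∀ i j, frobBil F A (b i) (b j) = if i.swap = j then 1 else 0 := by
  have hiso := frobBil_isotropic F A q hq hF L hL.2
  have hiso' := frobBil_isotropic F A q hq hF L' hL'.2
  have hr : finrank k L = 2 := hL.1
  have hr' : finrank k L' = 2 := hL'.1
  have htop : L ⊔ L' = ⊤ := by
    apply Submodule.eq_top_of_finrank_eq
    have h := Submodule.finrank_sup_add_finrank_inf_eq L L'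
    have hs' : L ⊓ L' = ⊥ := hs
    rw [hs', finrank_bot, hr, hr'] at h
    simpa using h
  let u := finBasisOfFinrankEq k L hr
  let w := finBasisOfFinrankEq k L' hr'
  let P : Matrix (Fin 2) (Fin 2) k := Matrix.of fun i j => frobBil F A (u i) (w j)
  let Q : Matrix (Fin 2) (Fin 2) k := Matrix.of fun i j => frobBil F A (w i) (u j)
  have hP : IsUnit P.det := by
    rw [isUnit_iff_ne_zero]
    intro h0
    obtain ⟨c, hc, hPc⟩ := Matrix.exists_mulVec_eq_zero_iff.2 h0
    have hz : ((∑ j, c j • w j : L') : Fin 4 → k) = 0 := by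
      apply frobBil_nondeg F A hA
      intro x
      obtain ⟨y, hy, z, hz, rfl⟩ := Submodule.mem_sup.1 (htop ▸ Submodule.mem_top : x ∈ L ⊔ L')
      rw [frobBil_add_left, hiso' z _ hz (SetLike.coe_mem _), add_zero]
      obtain ⟨d, hd⟩ : ∃ d : Fin 2 → k, y = ∑ i, d i • (u i : Fin 4 → k) :=
        ⟨u.repr ⟨y, hy⟩, by
          have h := congrArg Subtype.val (u.sum_repr ⟨y, hy⟩).symm
          rw [Submodule.coe_sum] at h
          exact h⟩
      rw [hd, frobBil_sum_left]
      refine Finset.sum_eq_zero fun i _ => ?_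
      have : frobBil F A (u i) ((∑ j, c j • w j : L') : Fin 4 → k) = P.mulVec c i := by
        rw [Submodule.coe_sum]
        simp only [Submodule.coe_smul]
        rw [frobBil_sum_right]
        simp [P, Matrix.mulVec, dotProduct, mul_comm]
      rw [this, hPc]; simp
    have := Fintype.linearIndependent_iff.1 w.linearIndependent c (Subtype.ext hz)
    exact hc (funext this)
  have hQ : IsUnit Q.det := by
    rw [isUnit_iff_ne_zero]
    intro h0
    obtain ⟨c, hc, hPc⟩ := Matrix.exists_mulVec_eq_zero_iff.2 h0
    have hz : ((∑ j, c j • u j : L) : Fin 4 → k) = 0 := by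
      apply frobBil_nondeg F A hA
      intro x
      obtain ⟨z, hz, y, hy, rfl⟩ := Submodule.mem_sup.1 (htop ▸ Submodule.mem_top : x ∈ L ⊔ L')
      rw [frobBil_add_left, hiso z _ hz (SetLike.coe_mem _), zero_add]
      obtain ⟨d, hd⟩ : ∃ d : Fin 2 → k, y = ∑ i, d i • (w i : Fin 4 → k) :=
        ⟨w.repr ⟨y, hy⟩, by
          have h := congrArg Subtype.val (w.sum_repr ⟨y, hy⟩).symm
          rw [Submodule.coe_sum] at h
          exact h⟩
      rw [hd, frobBil_sum_left]
      refine Finset.sum_eq_zero fun i _ => ?_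
      have : frobBil F A (w i) ((∑ j, c j • u j : L) : Fin 4 → k) = Q.mulVec c i := by
        rw [Submodule.coe_sum]
        simp only [Submodule.coe_smul]
        rw [frobBil_sum_right]
        simp [Q, Matrix.mulVec, dotProduct, mul_comm]
      rw [this, hPc]; simp
    have := Fintype.linearIndependent_iff.1 u.linearIndependent c (Subtype.ext hz)
    exact hc (funext this)
  have hmapdet : ∀ X : Matrix (Fin 2) (Fin 2) k, IsUnit X.det → IsUnit (X.map F).det := by
    intro X hX
    have : (X.map F).det = F X.det := (RingHom.map_det F X).symm
    rw [this]; exact hX.map F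
  have hPF := hmapdet P hP
  obtain ⟨G, hG, hGR⟩ := lang_matrix (q * q) (by nlinarith) (F.comp F)
    (by intro x; simp [hF, pow_mul]) ((P.map F).transpose⁻¹ * Q) (by
      rw [Matrix.det_mul]
      refine IsUnit.mul ?_ hQ
      rw [Matrix.isUnit_nonsing_inv_det_iff, Matrix.det_transpose]; exact hPF)
  let H : Matrix (Fin 2) (Fin 2) k := P⁻¹ * (G.map F).transpose⁻¹
  have hGFT : IsUnit (G.map F).transpose.det := by
    rw [Matrix.det_transpose]; exact hmapdet G hG
  have key1 : (G.map F).transpose * P * H = 1 := by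
    simp only [H]
    rw [Matrix.mul_assoc, Matrix.mul_nonsing_inv_cancel_left _ _ hP, Matrix.mul_nonsing_inv _ hGFT]
  have key2 : (H.map F).transpose * Q * G = 1 := by
    have e1 : (H.map F).transpose * ((P.map F).transpose * (G.map (F.comp F))) = 1 := by
      have := congrArg (fun X : Matrix (Fin 2) (Fin 2) k => (X.map F).transpose) key1
      simpa [Matrix.map_mul, Matrix.transpose_mul, Matrix.transpose_map, Matrix.map_map,
        RingHom.coe_comp, Matrix.map_one] using this
    rw [hGR, Matrix.mul_assoc (_⁻¹), Matrix.mul_nonsing_inv_cancel_left _ _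
      (by rw [Matrix.det_transpose]; exact hPF)] at e1
    rw [Matrix.mul_assoc, e1]
  let u' : Fin 2 → Fin 4 → k := fun j => ∑ i, G i j • (u i : Fin 4 → k)
  let w' : Fin 2 → Fin 4 → k := fun j => ∑ i, H i j • (w i : Fin 4 → k)
  have hu' : ∀ j, u' j ∈ L := fun j => L.sum_mem fun i _ => L.smul_mem _ (SetLike.coe_mem _)
  have hw' : ∀ j, w' j ∈ L' := fun j => L'.sum_mem fun i _ => L'.smul_mem _ (SetLike.coe_mem _)
  have huw : ∀ i j, frobBil F A (u' i) (w' j) = if i = j then 1 else 0 := by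
    intro i j
    rw [← Matrix.one_apply, ← key1]
    simp only [u', w', frobBil_sum_left, frobBil_sum_right]
    simp [Matrix.mul_apply, Fin.sum_univ_two, P]
    ring
  have hwu : ∀ i j, frobBil F A (w' i) (u' j) = if i = j then 1 else 0 := by
    intro i j
    rw [← Matrix.one_apply, ← key2]
    simp only [u', w', frobBil_sum_left, frobBil_sum_right]
    simp [Matrix.mul_apply, Fin.sum_univ_two, Q]
    ring
  let v : Fin 2 ⊕ Fin 2 → Fin 4 → k := Sum.elim u' w'
  have hv : ∀ i j, frobBil F A (v i) (v j) = if i.swap = j then 1 else 0 := by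
    rintro (i | i) (j | j)
    · simpa [v] using hiso _ _ (hu' i) (hu' j)
    · simpa [v] using huw i j
    · simpa [v] using hwu i j
    · simpa [v] using hiso' _ _ (hw' i) (hw' j)
  have hli : LinearIndependent k v := by
    rw [Fintype.linearIndependent_iff]
    intro c hc i
    have h1 : frobBil F A (v i.swap) (∑ j, c j • v j) = 0 := by
      rw [hc]; simp [frobBil]
    rw [frobBil_sum_right] at h1
    simpa [hv] using h1
  refine ⟨basisOfLinearIndependentOfCardEqFinrank hli (by simp), ?_, ?_, ?_⟩
  · rw [coe_basisOfLinearIndependentOfCardEqFinrank]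
    apply Submodule.eq_of_le_of_finrank_eq
    · rw [Submodule.span_le]; rintro _ ⟨i, rfl⟩; exact hu' i
    · rw [finrank_span_eq_card (hli.comp _ Sum.inl_injective), hr]; simp
  · rw [coe_basisOfLinearIndependentOfCardEqFinrank]
    apply Submodule.eq_of_le_of_finrank_eq
    · rw [Submodule.span_le]; rintro _ ⟨i, rfl⟩; exact hw' i
    · rw [finrank_span_eq_card (hli.comp _ Sum.inr_injective), hr']; simp
  · rw [coe_basisOfLinearIndependentOfCardEqFinrank]
    exact hv

end bil

/-- `Aut(X)` acts transitively on ordered pairs of skew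
lines on a smooth extremal surface `X` of degree `q+1`: for skew lines
`L, L'` on `X` and skew lines `M, M'` on `X` there is `g ∈ Aut(X)`
(represented by an invertible linear map of `k⁴` preserving the affine cone
of `X`) with `g(L) = M` and `g(L') = M'`. -/
theorem aut_transitive_on_skew_pairs {k : Type*} [Field k] [IsAlgClosed k]
    (p e q : ℕ) (hp : p.Prime) (hchar : CharP k p) (he : 1 ≤ e) (hq : q = p ^ e)
    (A : Matrix (Fin 4) (Fin 4) k) (hA : IsUnit A)
    (L L' M M' : Submodule k (Fin 4 → k))
    (hL : IsLineOn (extremalCone k q A) L) (hL' : IsLineOn (extremalCone k q A) L')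
    (hM : IsLineOn (extremalCone k q A) M) (hM' : IsLineOn (extremalCone k q A) M')
    (hLL' : SkewLine L L') (hMM' : SkewLine M M') :
    ∃ g : (Fin 4 → k) ≃ₗ[k] (Fin 4 → k),
      PreservesCone (extremalCone k q A) g ∧
        Submodule.map (g : (Fin 4 → k) →ₗ[k] (Fin 4 → k)) L = M ∧
        Submodule.map (g : (Fin 4 → k) →ₗ[k] (Fin 4 → k)) L' = M' := by
  have := Fact.mk hp
  have : ExpChar k p := ExpChar.prime hp
  have hq2 : 2 ≤ q := hq ▸ hp.two_le.trans (Nat.le_self_pow (by omega) p)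
  let F : k →+* k := iterateFrobenius k p e
  have hF : ∀ x, F x = x ^ q := fun x => by rw [hq]; rfl
  obtain ⟨b, hb1, hb2, hb⟩ := exists_adapted F A q hq2 hF hA L L' hL hL' hLL'
  obtain ⟨c, hc1, hc2, hc⟩ := exists_adapted F A q hq2 hF hA M M' hM hM' hMM'
  let g := b.equiv c (Equiv.refl _)
  have hgb : ∀ i, g (b i) = c i := fun i => by simp [g]
  have hform : ∀ x, frobForm q A (g x) = frobForm q A x := by
    intro x
    rw [frobForm_eq_frobBil F A q hF, frobForm_eq_frobBil F A q hF]
    rw [← b.sum_repr x, map_sum]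
    simp only [map_smul, hgb, frobBil_sum_left, frobBil_sum_right, hb, hc]
  refine ⟨g, ?_, ?_, ?_⟩
  · ext y
    constructor
    · rintro ⟨x, hx, rfl⟩
      exact (hform x).trans hx
    · intro hy
      refine ⟨g.symm y, ?_, by simp⟩
      have := hform (g.symm y)
      rw [LinearEquiv.apply_symm_apply] at this
      exact this.symm.trans hy
  · rw [← hb1, ← hc1, Submodule.map_span, ← Set.range_comp]
    congr 2
    ext1 i
    exact hgb _
  · rw [← hb2, ← hc2, Submodule.map_span, ← Set.range_comp]
    congr 2
    ext1 i
    exact hgb _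
end
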